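/- arXiv:0708.3105 — 2 statements merged into one kernel-verified Lean document; each statement's English description precedes it below -/
import Mathlib

section
/- Let A be a Noetherian ring and m a maximal ideal of A such that A/m is algebraically closed of characteristic 0. Let I be an m-primary ideal of A and let J be a minimal reduction of I. Then J + I_> = *J. -/
open Filter Polynomial

/-- An element `b` is weakly subintegral over a subset (subring) `R` of `B`:
there are `q ≥ 0` and `a_i ∈ R` (`1 ≤ i ≤ 2q+1`) with
`b^n + ∑_{i=1}^n (n choose i) a_i b^{n-i} = 0` for `q+1 ≤ n ≤ 2q+1`. -/
def WSubOver {B : Type*} [CommRing B] (R : Set B) (b : B) : Prop :=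
  ∃ q : ℕ, ∃ a : ℕ → B, (∀ i, a i ∈ R) ∧
    ∀ n, q + 1 ≤ n → n ≤ 2 * q + 1 →
      b ^ n + ∑ i ∈ Finset.Icc 1 n, (n.choose i : B) * a i * b ^ (n - i) = 0

/-- An element `b` is weakly subintegral over an ideal `I`:
there are `q ≥ 0` and `a_i ∈ I^i` with
`b^n + ∑_{i=1}^n (n choose i) a_i b^{n-i} = 0` for `q+1 ≤ n ≤ 2q+1`.
The set of such elements is the weak subintegral closure `*I`. -/
def WSubIdeal {A : Type*} [CommRing A] (I : Ideal A) (b : A) : Prop :=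
  ∃ q : ℕ, ∃ a : ℕ → A, (∀ i, a i ∈ I ^ i) ∧
    ∀ n, q + 1 ≤ n → n ≤ 2 * q + 1 →
      b ^ n + ∑ i ∈ Finset.Icc 1 n, (n.choose i : A) * a i * b ^ (n - i) = 0

/-- `a` is integral over the ideal `I`: `a^n + c_1 a^{n-1} + ⋯ + c_n = 0` with `c_i ∈ I^i`.
The set of such elements is the integral closure `Ī` of `I`. -/
def IntegralOverIdeal {A : Type*} [CommRing A] (I : Ideal A) (a : A) : Prop :=
  ∃ n : ℕ, 0 < n ∧ ∃ c : ℕ → A, (∀ i, c i ∈ I ^ i) ∧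
    a ^ n + ∑ i ∈ Finset.Icc 1 n, c i * a ^ (n - i) = 0

/-- `J` is a reduction of `I`: `J ⊆ I` and `J̄ = Ī`. -/
def IsReduction {A : Type*} [CommRing A] (J I : Ideal A) : Prop :=
  J ≤ I ∧ ∀ x, IntegralOverIdeal J x ↔ IntegralOverIdeal I x

/-- `J` is a minimal reduction of `I`. -/
def IsMinimalReduction {A : Type*} [CommRing A] (J I : Ideal A) : Prop :=
  IsReduction J I ∧ ∀ J' : Ideal A, IsReduction J' I → J' ≤ J → J' = J

/-- `ord_I(a) = max {n | a ∈ I^n}` (with value `∞` if `a ∈ ⋂ I^n`). -/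
noncomputable def ordI {A : Type*} [CommRing A] (I : Ideal A) (a : A) : ℕ∞ :=
  ⨆ (n : ℕ) (_ : a ∈ I ^ n), (n : ℕ∞)

/-- The sequence `ord_I(a^n)/n`, whose limit is the asymptotic Samuel function `v̄_I(a)`. -/
noncomputable def samuelSeq {A : Type*} [CommRing A] (I : Ideal A) (a : A) (n : ℕ) : ENNReal :=
  (ordI I (a ^ n) : ENNReal) / (n : ENNReal)

/-- `a ∈ I_>`, i.e. `v̄_I(a) > 1`, where `v̄_I(a)` is the limit of `ord_I(a^n)/n`
(this limit always exists in `[0,∞]`). -/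
def MemIgt {A : Type*} [CommRing A] (I : Ideal A) (a : A) : Prop :=
  ∃ L : ENNReal, 1 < L ∧ Filter.Tendsto (samuelSeq I a) Filter.atTop (nhds L)

attribute [local instance] Ideal.Quotient.field

/-!
The equations of weak subintegrality for `b` say that the Appell polynomials of the sequence
`(a i)` vanish at `b` in degrees `q + 1, …, 2 q + 1`. Since the Taylor coefficients of an Appell
polynomial are multiples of values of Appell polynomials of lower degree, `b` is then a root of
multiplicity `q + 1` of a monic polynomial of degree `2 q + 1`. Over an integrally closed domain of
characteristic zero there is at most one such root in each extension field, and it is rational.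

The inclusion `J + I_> ⊆ *J` is a translation argument: if `v̄_I(c) > 1`, then `c ^ n ∈ J ^ n` for
all large `n`, which provides the coefficients for `j + c`. Conversely, let `b ∈ *J` and
`L = J + (b)`. Then `J` is a reduction of `L`, and since `J` is a minimal reduction of `I`, lifts to
`J` of a basis of `J / m J` are analytically independent. So the fiber cone `⨁ L ^ n / m L ^ n`
contains a polynomial ring over `A / m`, over which the class of `b` in degree one satisfies the
equations. Hence this class differs from a polynomial by a nilpotent, and in degree one this gives
`j ∈ J` with `(b - j) ^ N ∈ m L ^ N` for some `N`, which forces `v̄_I(b - j) > 1`.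
-/

section Appell

variable {S : Type*} [CommRing S]

/-- The Appell polynomial `∑ i ≤ N, (N choose i) a_i X ^ (N - i)` of a sequence `a`. When
`a 0 = 1`, the equations of weak subintegrality for `b` say that `appell a N` vanishes at `b` for
`q + 1 ≤ N ≤ 2 * q + 1`. -/
noncomputable def appell (a : ℕ → S) (N : ℕ) : S[X] :=
  ∑ i ∈ Finset.range (N + 1), C (N.choose i * a i) * X ^ (N - i)

theorem appell_map {R : Type*} [CommRing R] (f : S →+* R) (a : ℕ → S) (N : ℕ) :
    (appell a N).map f = appell (fun i ↦ f (a i)) N := by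
  simp [appell, Polynomial.map_sum]

theorem eval_appell (a : ℕ → S) (N : ℕ) (b : S) :
    (appell a N).eval b = ∑ i ∈ Finset.range (N + 1), N.choose i * a i * b ^ (N - i) := by
  simp [appell, eval_finsetSum]

theorem eval_appell_of_zero_eq_one {a : ℕ → S} (h0 : a 0 = 1) (N : ℕ) (b : S) :
    (appell a N).eval b = b ^ N + ∑ i ∈ Finset.Icc 1 N, N.choose i * a i * b ^ (N - i) := by
  rw [eval_appell, Finset.range_eq_Ico, Finset.sum_eq_sum_Ico_succ_bot N.succ_pos]
  simp [h0, Finset.Ico_add_one_right_eq_Icc]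

theorem coeff_appell (a : ℕ → S) (N k : ℕ) :
    (appell a N).coeff k = N.choose k * a (N - k) := by
  rw [appell, ← Finset.sum_range_reflect, finsetSum_coeff]
  have hterm : ∀ j ∈ Finset.range (N + 1), (C (N.choose (N + 1 - 1 - j) * a (N + 1 - 1 - j)) *
      X ^ (N - (N + 1 - 1 - j)) : S[X]).coeff k = if k = j then N.choose j * a (N - j) else 0 := by
    intro j hj
    have hjN : j ≤ N := Finset.mem_range_succ_iff.1 hj
    rw [Nat.add_sub_cancel, Nat.sub_sub_self hjN, Nat.choose_symm hjN, coeff_C_mul_X_pow]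
  rw [Finset.sum_congr rfl hterm, Finset.sum_ite_eq, ite_eq_left_iff, Finset.mem_range_succ_iff]
  intro hk
  rw [Nat.choose_eq_zero_of_lt (not_le.1 hk), Nat.cast_zero, zero_mul]

theorem isMonicOfDegree_appell [Nontrivial S] {a : ℕ → S} (h0 : a 0 = 1) (N : ℕ) :
    (appell a N).IsMonicOfDegree N := by
  refine (isMonicOfDegree_iff _ _).2 ⟨natDegree_le_iff_coeff_eq_zero.2 fun k hk ↦ ?_, ?_⟩
  · rw [coeff_appell, Nat.choose_eq_zero_of_lt hk, Nat.cast_zero, zero_mul]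
  · simp [coeff_appell, h0]

theorem hasseDeriv_appell (a : ℕ → S) (N k : ℕ) :
    hasseDeriv k (appell a N) = C (N.choose k : S) * appell a (N - k) := by
  ext j
  rw [hasseDeriv_coeff, coeff_C_mul, coeff_appell, coeff_appell, ← mul_assoc, ← mul_assoc,
    ← Nat.cast_mul, ← Nat.cast_mul, Nat.sub_sub, add_comm k j]
  rw [mul_comm (Nat.choose _ k), Nat.choose_mul (Nat.le_add_left k j), Nat.add_sub_cancel]

theorem taylor_appell (a : ℕ → S) (N : ℕ) (b : S) :
    taylor b (appell a N) = appell (fun i ↦ (appell a i).eval b) N := by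
  ext k
  rw [taylor_coeff, hasseDeriv_appell, eval_mul, eval_C, coeff_appell]

theorem eval_appell_add (a : ℕ → S) (N : ℕ) (b c : S) :
    (appell a N).eval (b + c) = (appell (fun i ↦ (appell a i).eval c) N).eval b := by
  rw [← taylor_appell, taylor_eval]

theorem X_sub_C_pow_dvd_appell {a : ℕ → S} {b : S} {q : ℕ}
    (h : ∀ n, q + 1 ≤ n → n ≤ 2 * q + 1 → (appell a n).eval b = 0) :
    (X - C b) ^ (q + 1) ∣ appell a (2 * q + 1) := by
  rw [X_sub_C_pow_dvd_iff, ← taylor_apply, taylor_appell, X_pow_dvd_iff]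
  intro k hk
  rw [coeff_appell, h _ (by omega) (by omega), mul_zero]

theorem eval_appell_mem_pow {J : Ideal S} {a : ℕ → S} (ha : ∀ i, a i ∈ J ^ i) {x : S} (hx : x ∈ J)
    (N : ℕ) : (appell a N).eval x ∈ J ^ N := by
  rw [eval_appell]
  refine Ideal.sum_mem _ fun i hi ↦ ?_
  rw [← Nat.add_sub_cancel' (Finset.mem_range_succ_iff.1 hi), pow_add, Nat.add_sub_cancel_left]
  exact Ideal.mul_mem_mul (Ideal.mul_mem_left _ _ (ha i)) (Ideal.pow_mem_pow hx _)

theorem wSubIdeal_iff_appell {J : Ideal S} {b : S} :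
    WSubIdeal J b ↔ ∃ (q : ℕ) (a : ℕ → S), a 0 = 1 ∧ (∀ i, a i ∈ J ^ i) ∧
      ∀ n, q + 1 ≤ n → n ≤ 2 * q + 1 → (appell a n).eval b = 0 := by
  constructor
  · rintro ⟨q, a, ha, h⟩
    refine ⟨q, Function.update a 0 1, Function.update_self .., fun i ↦ ?_, fun n hn hn' ↦ ?_⟩
    · rcases eq_or_ne i 0 with rfl | hi
      · simp
      · rw [Function.update_of_ne hi]
        exact ha i
    · rw [eval_appell_of_zero_eq_one (Function.update_self ..), ← h n hn hn']
      congr 1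
      refine Finset.sum_congr rfl fun i hi ↦ ?_
      rw [Function.update_of_ne (Nat.one_le_iff_ne_zero.1 (Finset.mem_Icc.1 hi).1)]
  · rintro ⟨q, a, h0, ha, h⟩
    exact ⟨q, a, ha, fun n hn hn' ↦ eval_appell_of_zero_eq_one h0 n b ▸ h n hn hn'⟩

theorem eval_zero_appell (a : ℕ → S) (N : ℕ) : (appell a N).eval 0 = a N := by
  rw [← coeff_zero_eq_eval_zero, coeff_appell]
  simp

end Appell

theorem wSubIdeal_add_of_pow_mem {A : Type*} [CommRing A] {J : Ideal A} {j c : A} (hj : j ∈ J)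
    {q : ℕ} (hc : ∀ n, q + 1 ≤ n → c ^ n ∈ J ^ n) : WSubIdeal J (j + c) := by
  -- Translating by `-(j + c)` a sequence that vanishes beyond `q` gives coefficients for which
  -- the equations hold; starting with the powers of `c` keeps these coefficients in `J ^ i`.
  let e : ℕ → A := fun i ↦ if i ≤ q then c ^ i else 0
  have hpow (n : ℕ) : (appell (fun i ↦ c ^ i) n).eval (-c) = 0 ^ n := by
    rw [eval_appell, ← add_neg_cancel c, add_pow]
    exact Finset.sum_congr rfl fun i _ ↦ by ring
  have hmem (n : ℕ) : (appell e n).eval (-c) ∈ J ^ n := by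
    rcases le_or_gt n q with hn | hn
    · have : (appell e n).eval (-c) = 0 ^ n := by
        rw [← hpow, eval_appell, eval_appell]
        refine Finset.sum_congr rfl fun i hi ↦ ?_
        rw [show e i = c ^ i from if_pos ((Finset.mem_range_succ_iff.1 hi).trans hn)]
      exact this ▸ Ideal.pow_mem_pow J.zero_mem n
    · rw [eval_appell]
      refine Ideal.sum_mem _ fun i hi ↦ Ideal.mem_of_dvd _ ?_ (hc n hn)
      rw [← Nat.add_sub_cancel' (Finset.mem_range_succ_iff.1 hi), pow_add, Nat.add_sub_cancel_left]
      refine mul_dvd_mul (Dvd.dvd.mul_left ?_ _) (pow_dvd_pow_of_dvd (dvd_neg.2 dvd_rfl) _)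
      dsimp only [e]
      split_ifs
      exacts [dvd_rfl, dvd_zero _]
  refine wSubIdeal_iff_appell.2 ⟨q, fun n ↦ (appell e n).eval (-j + -c), ?_, fun n ↦ ?_,
    fun n hn _ ↦ ?_⟩
  · simp [e, eval_appell]
  · beta_reduce
    rw [eval_appell_add]
    exact eval_appell_mem_pow hmem (neg_mem hj) n
  · rw [← eval_appell_add, ← neg_add, add_neg_cancel, eval_zero_appell]
    exact if_neg (by omega)

section Samuel

open scoped ENNReal NNReal

theorem le_ordI_iff {A : Type*} [CommRing A] {I : Ideal A} {a : A} {n : ℕ} :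
    n ≤ ordI I a ↔ a ∈ I ^ n := by
  refine ⟨fun h ↦ ?_, fun h ↦ le_iSup₂_of_le n h le_rfl⟩
  rcases n with _ | n
  · simp
  have hlt : (n : ℕ∞) < ordI I a := (Nat.cast_lt.2 n.lt_succ_self).trans_le h
  simp only [ordI, lt_iSup_iff, Nat.cast_lt, exists_prop] at hlt
  obtain ⟨k, hak, hk⟩ := hlt
  exact Ideal.pow_le_pow_right hk hak

theorem ordI_add_ordI_le_ordI_mul {A : Type*} [CommRing A] (I : Ideal A) (a b : A) :
    ordI I a + ordI I b ≤ ordI I (a * b) :=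
  ENat.biSup_add_biSup_le' ⟨0, by simp⟩ ⟨0, by simp⟩ fun i hi j hj ↦ by
    rw [← Nat.cast_add, le_ordI_iff, pow_add]
    exact Ideal.mul_mem_mul hi hj

theorem nsmul_le_of_superadditive {M : Type*} [AddCommMonoid M] [PartialOrder M]
    [CanonicallyOrderedAdd M] [IsOrderedAddMonoid M] {u : ℕ → M}
    (hu : ∀ m n, u m + u n ≤ u (m + n)) (k N r : ℕ) : k • u N ≤ u (k * N + r) := by
  induction k with
  | zero => simp
  | succ k ih =>
    calc (k + 1) • u N = u N + k • u N := succ_nsmul' ..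
      _ ≤ u N + u (k * N + r) := add_le_add_right ih _
      _ ≤ u (N + (k * N + r)) := hu _ _
      _ = u ((k + 1) * N + r) := by congr 1; ring

theorem eventually_le_div_of_superadditive {u : ℕ → ℝ≥0∞} (hu : ∀ m n, u m + u n ≤ u (m + n))
    {N : ℕ} (hN : 0 < N) {c : ℝ≥0∞} (hc : c < u N / N) : ∀ᶠ n : ℕ in atTop, c ≤ u n / n := by
  obtain ⟨d, hcd, hd⟩ := ENNReal.lt_iff_exists_nnreal_btwn.1 hc
  lift c to ℝ≥0 using hcd.ne_top
  rw [ENNReal.coe_lt_coe] at hcd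
  obtain ⟨K, hK⟩ := exists_nat_ge (c / (d - c))
  have hle {k : ℕ} (hk : K ≤ k) : c * (k + 1) ≤ d * k := by
    rw [div_le_iff₀ (tsub_pos_of_lt hcd)] at hK
    obtain ⟨e, rfl⟩ := exists_add_of_le hcd.le
    rw [add_tsub_cancel_left] at hK
    calc c * (k + 1) = c * k + c := by ring
      _ ≤ c * k + k * e := by gcongr; exact hK.trans (by gcongr)
      _ = (c + e) * k := by ring
  filter_upwards [eventually_ge_atTop (K * N), eventually_gt_atTop 0] with n hn hn0
  have hk : K ≤ n / N := (Nat.le_div_iff_mul_le hN).2 hn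
  rw [ENNReal.le_div_iff_mul_le (by simp [hn0.ne']) (by simp)]
  calc (c * n : ℝ≥0∞) ≤ c * ((n / N + 1 : ℕ) * N : ℕ) := by
        gcongr; exact (Nat.lt_mul_of_div_lt (Nat.lt_succ_self _) hN).le
    _ = (c * ((n / N : ℕ) + 1) : ℝ≥0) * N := by push_cast; ring
    _ ≤ (d * (n / N : ℕ) : ℝ≥0) * N :=
        mul_le_mul_left (ENNReal.coe_le_coe.2 (hle hk)) _
    _ = (n / N : ℕ) * (d * N) := by push_cast; ring
    _ ≤ (n / N : ℕ) * u N := by gcongr; exact ENNReal.mul_le_of_le_div hd.le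
    _ = (n / N) • u N := (nsmul_eq_mul ..).symm
    _ ≤ u n := by
      simpa only [Nat.div_add_mod'] using nsmul_le_of_superadditive hu (n / N) N (n % N)

theorem tendsto_div_atTop_iSup_of_superadditive {u : ℕ → ℝ≥0∞}
    (hu : ∀ m n, u m + u n ≤ u (m + n)) :
    Tendsto (fun n : ℕ ↦ u n / n) atTop (nhds (⨆ (n : ℕ) (_ : 0 < n), u n / n)) := by
  refine tendsto_order.2 ⟨fun c hc ↦ ?_, fun c hc ↦ ?_⟩
  · obtain ⟨d, hcd, hd⟩ := exists_between hc
    simp only [lt_iSup_iff] at hd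
    obtain ⟨N, hN, hdN⟩ := hd
    filter_upwards [eventually_le_div_of_superadditive hu hN hdN] with n hn
    exact hcd.trans_le hn
  · filter_upwards [eventually_gt_atTop 0] with n hn
    exact (le_iSup₂ (f := fun (n : ℕ) (_ : 0 < n) ↦ u n / (n : ℝ≥0∞)) n hn).trans_lt hc

variable {A : Type*} [CommRing A] {I : Ideal A}

theorem memIgt_of_pow_mem {b : A} {P : ℕ} (hP : 0 < P) (h : b ^ P ∈ I ^ (P + 1)) : MemIgt I b := by
  refine ⟨_, lt_of_lt_of_le ?_ (le_iSup₂ (f := fun (n : ℕ) (_ : 0 < n) ↦ samuelSeq I b n) P hP),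
    tendsto_div_atTop_iSup_of_superadditive fun m n ↦ ?_⟩
  · rw [samuelSeq, ENNReal.lt_div_iff_mul_lt (by simp [hP.ne']) (by simp), one_mul]
    calc (P : ℝ≥0∞) < (P + 1 : ℕ) := Nat.cast_lt.2 P.lt_succ_self
      _ = ((P + 1 : ℕ) : ℕ∞) := by simp
      _ ≤ ordI I (b ^ P) := ENat.toENNReal_le.2 (le_ordI_iff.2 h)
  · rw [pow_add, ← ENat.toENNReal_add, ENat.toENNReal_le]
    exact ordI_add_ordI_le_ordI_mul ..

theorem MemIgt.exists_pow_mem {c : A} (h : MemIgt I c) (r : ℕ) :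
    ∃ q, ∀ n, q + 1 ≤ n → c ^ n ∈ I ^ (n + r) := by
  obtain ⟨L, hL, hlim⟩ := h
  obtain ⟨t, ht, htL⟩ := ENNReal.lt_iff_exists_nnreal_btwn.1 hL
  rw [ENNReal.one_lt_coe_iff] at ht
  obtain ⟨e, rfl⟩ := exists_add_of_le ht.le
  have he : 0 < e := by simpa using ht
  obtain ⟨N, hN⟩ := eventually_atTop.1 (hlim.eventually_const_lt htL)
  obtain ⟨M, hM⟩ := exists_nat_ge (r / e)
  refine ⟨max N M, fun n hn ↦ le_ordI_iff.1 (ENat.toENNReal_le.1 ?_)⟩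
  have hr : (r : ℝ≥0) ≤ n * e :=
    (div_le_iff₀ he).1 (hM.trans (Nat.cast_le.2 (by omega)))
  calc (((n + r : ℕ) : ℕ∞) : ℝ≥0∞) = ((n + r : ℝ≥0) : ℝ≥0∞) := by simp
    _ ≤ ((n + n * e : ℝ≥0) : ℝ≥0∞) := by gcongr
    _ = (1 + e : ℝ≥0) * n := by push_cast; ring
    _ ≤ ordI I (c ^ n) := ENNReal.mul_le_of_le_div (hN n (by omega)).le

end Samuel

section Reduction

variable {A : Type*} [CommRing A] {I J K L : Ideal A} {x : A}

theorem IntegralOverIdeal.mono (h : J ≤ I) (hx : IntegralOverIdeal J x) :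
    IntegralOverIdeal I x := by
  obtain ⟨n, hn, c, hc, h0⟩ := hx
  exact ⟨n, hn, c, fun i ↦ Ideal.pow_right_mono h i (hc i), h0⟩

theorem integralOverIdeal_of_mem (hx : x ∈ I) : IntegralOverIdeal I x := by
  refine ⟨1, one_pos, Pi.single 1 (-x), fun i ↦ ?_, by simp⟩
  rcases eq_or_ne i 1 with rfl | hi
  · simpa using hx
  · simp [hi]

theorem WSubIdeal.integralOverIdeal (hx : WSubIdeal J x) : IntegralOverIdeal J x := by
  obtain ⟨q, a, ha, h⟩ := hx
  exact ⟨q + 1, q.succ_pos, fun i ↦ (q + 1).choose i * a i,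
    fun i ↦ Ideal.mul_mem_left _ _ (ha i), h (q + 1) le_rfl (by omega)⟩

/-- `J` is a reduction of `L` in the sense of Northcott and Rees: `J ⊆ L` and `L^(n+1) = J L^n`
for some `n`; the inclusion `J L^n ⊆ L^(n+1)` is automatic. For finitely generated `L` this is the
same as `IsReduction J L`, see `isReduction_iff_isPowReduction`. -/
def IsPowReduction (J L : Ideal A) : Prop :=
  J ≤ L ∧ ∃ n, L ^ (n + 1) ≤ J * L ^ n

theorem IsPowReduction.refl (J : Ideal A) : IsPowReduction J J :=
  ⟨le_rfl, 0, by simp⟩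

theorem pow_add_le_pow_mul {r : ℕ} (h : L ^ (r + 1) ≤ J * L ^ r) (n : ℕ) :
    L ^ (n + r) ≤ J ^ n * L ^ r := by
  induction n with
  | zero => simp
  | succ n ih =>
    calc L ^ (n + 1 + r) = L * L ^ (n + r) := by ring
      _ ≤ L * (J ^ n * L ^ r) := Ideal.mul_mono_right ih
      _ = J ^ n * L ^ (r + 1) := by ring
      _ ≤ J ^ n * (J * L ^ r) := Ideal.mul_mono_right h
      _ = J ^ (n + 1) * L ^ r := by ring

theorem IsPowReduction.exists_pow_add_le (h : IsPowReduction J L) : ∃ r, ∀ n, L ^ (n + r) ≤ J ^ n :=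
  let ⟨r, hr⟩ := h.2
  ⟨r, fun n ↦ (pow_add_le_pow_mul hr n).trans Ideal.mul_le_left⟩

theorem IsPowReduction.trans (hKJ : IsPowReduction K J) (hJL : IsPowReduction J L) :
    IsPowReduction K L := by
  obtain ⟨hKJ, t, ht⟩ := hKJ
  obtain ⟨hJL, r, hr⟩ := hJL
  refine ⟨hKJ.trans hJL, t + r, ?_⟩
  calc L ^ (t + r + 1) = L ^ (t + 1 + r) := by ring
    _ ≤ J ^ (t + 1) * L ^ r := pow_add_le_pow_mul hr _
    _ ≤ K * J ^ t * L ^ r := Ideal.mul_mono_left ht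
    _ ≤ K * L ^ t * L ^ r := Ideal.mul_mono_left (Ideal.mul_mono_right (Ideal.pow_right_mono hJL t))
    _ = K * L ^ (t + r) := by ring

theorem sup_pow_succ_le (J K : Ideal A) (n : ℕ) :
    (J ⊔ K) ^ (n + 1) ≤ J * (J ⊔ K) ^ n ⊔ K ^ (n + 1) := by
  induction n with
  | zero => simp
  | succ n ih =>
    calc (J ⊔ K) ^ (n + 2) = J * (J ⊔ K) ^ (n + 1) ⊔ K * (J ⊔ K) ^ (n + 1) := by
          rw [pow_succ' _ (n + 1), Ideal.sup_mul]
      _ ≤ J * (J ⊔ K) ^ (n + 1) ⊔ K * (J * (J ⊔ K) ^ n ⊔ K ^ (n + 1)) := by gcongr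
      _ = J * (J ⊔ K) ^ (n + 1) ⊔ (J * (K * (J ⊔ K) ^ n) ⊔ K ^ (n + 2)) := by
          rw [Ideal.mul_sup, mul_left_comm, ← pow_succ']
      _ ≤ J * (J ⊔ K) ^ (n + 1) ⊔ (J * (J ⊔ K) ^ (n + 1) ⊔ K ^ (n + 2)) := by
          rw [pow_succ' (J ⊔ K) n]; gcongr; exact le_sup_right
      _ = J * (J ⊔ K) ^ (n + 1) ⊔ K ^ (n + 2) := by rw [← sup_assoc, sup_idem]

theorem isPowReduction_sup_span_of_pow_mem {n : ℕ}
    (h : x ^ (n + 1) ∈ J * (J ⊔ Ideal.span {x}) ^ n) :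
    IsPowReduction J (J ⊔ Ideal.span {x}) :=
  ⟨le_sup_left, n, (sup_pow_succ_le ..).trans <| sup_le le_rfl <| by
    rwa [Ideal.span_singleton_pow, Ideal.span_singleton_le_iff_mem]⟩

theorem IntegralOverIdeal.isPowReduction_sup_span (hx : IntegralOverIdeal J x) :
    IsPowReduction J (J ⊔ Ideal.span {x}) := by
  obtain ⟨n, hn, c, hc, h⟩ := hx
  obtain ⟨r, rfl⟩ := Nat.exists_eq_succ_of_ne_zero hn.ne'
  refine isPowReduction_sup_span_of_pow_mem (n := r) ?_
  rw [eq_neg_of_add_eq_zero_left h]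
  refine neg_mem (Ideal.sum_mem _ fun i hi ↦ ?_)
  obtain ⟨hi1, hir⟩ := Finset.mem_Icc.1 hi
  obtain ⟨j, rfl⟩ := Nat.exists_eq_succ_of_ne_zero (Nat.one_le_iff_ne_zero.1 hi1)
  obtain ⟨k, rfl⟩ := Nat.exists_eq_add_of_le (Nat.succ_le_succ_iff.1 hir)
  have hle : J ^ (j + 1) * Ideal.span {x} ^ k ≤ J * (J ⊔ Ideal.span {x}) ^ (j + k) := by
    rw [pow_succ', mul_assoc, pow_add]
    gcongr
    exacts [le_sup_left, le_sup_right]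
  refine hle (Ideal.mul_mem_mul (hc _) ?_)
  rw [Nat.succ_eq_add_one, Nat.succ_eq_add_one, Nat.add_sub_add_right, Nat.add_sub_cancel_left]
  exact Ideal.pow_mem_pow (Ideal.mem_span_singleton_self x) k

theorem isPowReduction_sup_of_fg (hI : I.FG) (h : ∀ x ∈ I, IntegralOverIdeal J x) :
    IsPowReduction J (J ⊔ I) := by
  classical
  obtain ⟨s, rfl⟩ := hI
  induction s using Finset.induction_on with
  | empty => simpa using IsPowReduction.refl J
  | insert x s _ ih =>
    rw [Finset.coe_insert] at h ⊢
    have hx : IntegralOverIdeal (J ⊔ Ideal.span s) x :=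
      (h x (Ideal.subset_span (Set.mem_insert x s))).mono le_sup_left
    rw [Ideal.span_insert, sup_comm (Ideal.span {x}), ← sup_assoc]
    exact (ih fun y hy ↦ h y (Ideal.span_mono (Set.subset_insert x s) hy)).trans
      hx.isPowReduction_sup_span

theorem integralOverIdeal_of_eval_eq_zero {F : A[X]} {N : ℕ} (hN : 0 < N) (hdeg : F.natDegree ≤ N)
    (hlead : F.coeff N = 1) (hcoeff : ∀ i ≤ N, F.coeff (N - i) ∈ J ^ i) (h : F.eval x = 0) :
    IntegralOverIdeal J x := by
  refine ⟨N, hN, fun i ↦ if i ≤ N then F.coeff (N - i) else 0, fun i ↦ ?_, ?_⟩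
  · dsimp only
    split_ifs with hi
    exacts [hcoeff i hi, zero_mem _]
  · refine Eq.trans ?_ h
    rw [eval_eq_sum_range' (Nat.lt_succ_of_le hdeg), ← Finset.sum_range_reflect,
      Finset.range_eq_Ico, Finset.sum_eq_sum_Ico_succ_bot N.succ_pos]
    congr 1
    · simp [hlead]
    · refine Finset.sum_congr rfl fun i hi ↦ ?_
      simp only [if_pos (Nat.lt_succ_iff.1 (Finset.mem_Ico.1 hi).2), Nat.succ_sub_one]

theorem integralOverIdeal_of_eval_mul_pow {p : A[X]} (hp : p.Monic)
    (hcoeff : ∀ k, p.coeff k ∈ J ^ (p.natDegree - k)) {s : ℕ} (h : p.eval x * x ^ s = 0) :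
    IntegralOverIdeal J x := by
  refine integralOverIdeal_of_eval_eq_zero (F := p * X ^ (s + 1)) (N := p.natDegree + (s + 1))
    (by omega) (natDegree_mul_le_of_le le_rfl (natDegree_X_pow_le _)) ?_ (fun i hi ↦ ?_) ?_
  · rw [coeff_mul_X_pow, hp.coeff_natDegree]
  · rw [coeff_mul_X_pow']
    split_ifs
    · refine Ideal.pow_le_pow_right ?_ (hcoeff _)
      omega
    · exact zero_mem _
  · rw [eval_mul, eval_X_pow, pow_succ, ← mul_assoc, h, zero_mul]

theorem IsPowReduction.integralOverIdeal (h : IsPowReduction J L) (hL : L.FG) (hx : x ∈ L) :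
    IntegralOverIdeal J x := by
  obtain ⟨-, n, hn⟩ := h
  have : Module.Finite A (L ^ n : Ideal A) := Module.Finite.iff_fg.2 hL.pow
  have hxL (y : A) (hy : y ∈ L ^ n) : x * y ∈ J • L ^ n :=
    hn (pow_succ' L n ▸ Ideal.mul_mem_mul hx hy)
  obtain ⟨p, hp, -, hcoeff, hzero⟩ :=
    LinearMap.exists_monic_and_natDegree_eq_and_coeff_mem_pow_and_aeval_eq_zero A
      (algebraMap A (Module.End A (L ^ n : Ideal A)) x) J (by
        rintro _ ⟨v, rfl⟩
        have hmap : (J • (⊤ : Submodule A (L ^ n : Ideal A))).map (L ^ n : Ideal A).subtype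
            = J • L ^ n := by
          rw [Submodule.map_smul'', Submodule.map_top, Submodule.range_subtype]
        obtain ⟨w, hw, hwv⟩ := hmap ▸ hxL v v.2
        rwa [show algebraMap A (Module.End A (L ^ n : Ideal A)) x v = w from Subtype.ext hwv.symm])
  refine integralOverIdeal_of_eval_mul_pow hp hcoeff (s := n) ?_
  rw [aeval_algebraMap_apply] at hzero
  simpa using congrArg Subtype.val (LinearMap.congr_fun hzero ⟨x ^ n, Ideal.pow_mem_pow hx n⟩)

theorem isReduction_iff_isPowReduction (hI : I.FG) : IsReduction J I ↔ IsPowReduction J I := by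
  constructor
  · rintro ⟨hJI, h⟩
    simpa only [sup_eq_right.2 hJI] using
      isPowReduction_sup_of_fg hI fun x hx ↦ (h x).2 (integralOverIdeal_of_mem hx)
  · refine fun h ↦ ⟨h.1, fun x ↦ ⟨.mono h.1, fun hx ↦ ?_⟩⟩
    exact (h.trans hx.isPowReduction_sup_span).integralOverIdeal
      (Submodule.FG.sup hI (Submodule.fg_span_singleton x))
      (Ideal.mem_sup_right (Ideal.mem_span_singleton_self x))

/-- `J` is basic in the sense of Northcott and Rees: it has no reduction other than itself.
This is the property of a minimal reduction that makes its generators analytically independent. -/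
def IsBasicIdeal (J : Ideal A) : Prop :=
  ∀ J', IsPowReduction J' J → J' = J

theorem IsMinimalReduction.isBasicIdeal (hI : I.FG) (hJ : IsMinimalReduction J I) :
    IsBasicIdeal J := fun J' hJ' ↦
  hJ.2 J' ((isReduction_iff_isPowReduction hI).2
    (hJ'.trans ((isReduction_iff_isPowReduction hI).1 hJ.1))) hJ'.1

end Reduction

section AnalyticIndependence

variable {A : Type*} [CommRing A] {σ : Type*}

theorem aeval_smul_of_isHomogeneous {S : Type*} [CommRing S] [Algebra A S]
    {g : MvPolynomial σ A} {n : ℕ} (hg : g.IsHomogeneous n) (t : S) (x : σ → S) :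
    MvPolynomial.aeval (t • x) g = t ^ n * MvPolynomial.aeval x g := by
  simp only [MvPolynomial.aeval_def, MvPolynomial.eval₂_eq, Finset.mul_sum]
  refine Finset.sum_congr rfl fun d hd ↦ ?_
  simp only [Pi.smul_apply, smul_eq_mul, mul_pow, Finset.prod_mul_distrib,
    Finset.prod_pow_eq_pow_sum, ← hg.degree_eq_sum_deg_support hd]
  exact mul_left_comm ..

theorem multiset_prod_map_mem_pow {J : Ideal A} {x : σ → A} (hx : ∀ i, x i ∈ J)
    (s : Multiset σ) : (s.map x).prod ∈ J ^ s.card := by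
  induction s using Multiset.induction_on with
  | empty => simp
  | cons i s ih =>
    rw [Multiset.map_cons, Multiset.prod_cons, Multiset.card_cons, pow_succ']
    exact Ideal.mul_mem_mul (hx i) ih

theorem multiset_prod_map_sub_mem {J' J : Ideal A} {x z : σ → A} (hx : ∀ i, x i ∈ J)
    (hz : ∀ i, z i ∈ J) (hxz : ∀ i, x i - z i ∈ J') (s : Multiset σ) :
    (s.map x).prod - (s.map z).prod ∈ J' * J ^ (s.card - 1) := by
  induction s using Multiset.induction_on with
  | empty => simp
  | cons i s ih =>
    rw [Multiset.map_cons, Multiset.map_cons, Multiset.prod_cons, Multiset.prod_cons,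
      Multiset.card_cons, Nat.add_sub_cancel, ← sub_add_sub_cancel _ (z i * (s.map x).prod),
      ← sub_mul, ← mul_sub]
    refine add_mem (Ideal.mul_mem_mul (hxz i) (multiset_prod_map_mem_pow hx s)) ?_
    rcases s.empty_or_exists_mem with rfl | ⟨j, hj⟩
    · simp
    · have := Ideal.mul_mem_mul (hz i) ih
      rwa [mul_left_comm, ← pow_succ',
        Nat.sub_add_cancel (Multiset.card_pos_iff_exists_mem.2 ⟨j, hj⟩)] at this

theorem aeval_sub_aeval_mem {J' J : Ideal A} {x z : σ → A} (hx : ∀ i, x i ∈ J)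
    (hz : ∀ i, z i ∈ J) (hxz : ∀ i, x i - z i ∈ J') {g : MvPolynomial σ A} {n : ℕ}
    (hg : g.IsHomogeneous n) :
    MvPolynomial.aeval x g - MvPolynomial.aeval z g ∈ J' * J ^ (n - 1) := by
  rw [MvPolynomial.aeval_def, MvPolynomial.aeval_def, MvPolynomial.eval₂_eq,
    MvPolynomial.eval₂_eq, ← Finset.sum_sub_distrib]
  refine Ideal.sum_mem _ fun d hd ↦ ?_
  rw [← mul_sub]
  refine Ideal.mul_mem_left _ _ ?_
  have hcard : d.toMultiset.card = n :=
    (Finsupp.card_toMultiset d).trans (hg.degree_eq_sum_deg_support hd).symm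
  have hprod (w : σ → A) : (d.toMultiset.map w).prod = ∏ i ∈ d.support, w i ^ d i := by
    rw [Finsupp.toMultiset_map, Finsupp.prod_toMultiset,
      Finsupp.prod_mapDomain_index (fun _ ↦ pow_zero _) (fun _ _ _ ↦ pow_add _ _ _)]
    rfl
  rw [← hprod, ← hprod, ← hcard]
  exact multiset_prod_map_sub_mem hx hz hxz d.toMultiset

variable {m J : Ideal A}

theorem le_map_ker_sup_span (φ : J →ₗ[A] A ⧸ m) {y : J} (hy : φ y = 1) :
    J ≤ (LinearMap.ker φ).map J.subtype ⊔ Ideal.span {(y : A)} := by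
  intro z hz
  obtain ⟨c, hc⟩ := Ideal.Quotient.mk_surjective (φ ⟨z, hz⟩)
  have hker : (⟨z, hz⟩ : J) - c • y ∈ LinearMap.ker φ := by
    rw [LinearMap.mem_ker, map_sub, map_smul, hy, ← hc, sub_eq_zero, Algebra.smul_def, mul_one]
    rfl
  rw [← sub_add_cancel z (c * y)]
  exact Submodule.add_mem_sup ⟨_, hker, rfl⟩
    (Ideal.mul_mem_left _ _ (Ideal.mem_span_singleton_self _))

theorem mul_le_map_ker (φ : J →ₗ[A] A ⧸ m) : m * J ≤ (LinearMap.ker φ).map J.subtype := by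
  refine Ideal.mul_le.2 fun r hr s hs ↦ ⟨r • ⟨s, hs⟩, ?_, rfl⟩
  rw [SetLike.mem_coe, LinearMap.mem_ker, map_smul, Algebra.smul_def,
    Ideal.Quotient.algebraMap_eq, Ideal.Quotient.eq_zero_iff_mem.2 hr, zero_mul]

variable {B : Module.Basis σ (A ⧸ m) (J ⧸ (m • ⊤ : Submodule A J))} {x : σ → J}

theorem exists_linearMap_apply_eq (hx : ∀ i, Submodule.Quotient.mk (x i) = B i) (v : σ → A ⧸ m) :
    ∃ φ : J →ₗ[A] A ⧸ m, ∀ i, φ (x i) = v i :=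
  ⟨(B.constr (A ⧸ m) v).restrictScalars A ∘ₗ Submodule.mkQ _, fun i ↦ by simp [hx]⟩

theorem eq_span_range_sup_mul (hx : ∀ i, Submodule.Quotient.mk (x i) = B i) :
    J = Ideal.span (Set.range fun i ↦ (x i : A)) ⊔ m * J := by
  have hspan :
      (Submodule.span A (Set.range x)).map (Submodule.mkQ (m • ⊤ : Submodule A J)) = ⊤ := by
    have hB : Submodule.mkQ (m • ⊤ : Submodule A J) ∘ x = B := funext hx
    rw [Submodule.map_span, ← Set.range_comp, hB,
      ← Submodule.restrictScalars_span A (A ⧸ m) Ideal.Quotient.mk_surjective, B.span_eq,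
      Submodule.restrictScalars_top]
  rw [Submodule.map_mkQ_eq_top] at hspan
  have := congrArg (Submodule.map J.subtype) hspan
  rw [Submodule.map_sup, Submodule.map_smul'', Submodule.map_top, Submodule.range_subtype,
    Submodule.map_span, ← Set.range_comp, sup_comm] at this
  exact this.symm

variable [m.IsMaximal]

theorem IsBasicIdeal.pow_succ_notMem (hJ : IsBasicIdeal J) (φ : J →ₗ[A] A ⧸ m) {y : J}
    (hy : φ y = 1) (n : ℕ) : (y : A) ^ (n + 1) ∉ (LinearMap.ker φ).map J.subtype * J ^ n := by
  intro h
  have hsup : (LinearMap.ker φ).map J.subtype ⊔ Ideal.span {(y : A)} = J :=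
    le_antisymm (sup_le (Submodule.map_subtype_le J _)
      ((Ideal.span_singleton_le_iff_mem J).2 y.2)) (le_map_ker_sup_span φ hy)
  have hred := isPowReduction_sup_span_of_pow_mem (n := n) (by rwa [hsup])
  rw [hsup] at hred
  obtain ⟨w, hw, hwy⟩ : (y : A) ∈ (LinearMap.ker φ).map J.subtype := (hJ _ hred).symm ▸ y.2
  rw [Subtype.ext hwy, SetLike.mem_coe, LinearMap.mem_ker, hy] at hw
  exact one_ne_zero hw

theorem IsBasicIdeal.aeval_mem_of_apply_eq_one (hJ : IsBasicIdeal J) {x : σ → J}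
    (φ : J →ₗ[A] A ⧸ m) {l : σ → A} (hφ : ∀ i, φ (x i) = Ideal.Quotient.mk m (l i)) {y : J}
    (hy : φ y = 1) {g : MvPolynomial σ A} {n : ℕ} (hg : g.IsHomogeneous (n + 1))
    (hmem : MvPolynomial.aeval (fun i ↦ (x i : A)) g ∈ m * J ^ (n + 1)) :
    MvPolynomial.aeval l g ∈ m := by
  by_contra hgl
  set J' : Ideal A := (LinearMap.ker φ).map J.subtype
  have hmJ : m * J ^ (n + 1) ≤ J' * J ^ n := by
    rw [pow_succ', ← mul_assoc]
    exact Ideal.mul_mono_left (mul_le_map_ker φ)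
  have hcongr (i : σ) : (x i : A) - ((y : A) • l) i ∈ J' := by
    refine ⟨x i - l i • y, ?_, by simp [mul_comm]⟩
    rw [SetLike.mem_coe, LinearMap.mem_ker, map_sub, map_smul, hφ, hy, Algebra.smul_def, mul_one,
      Ideal.Quotient.algebraMap_eq, sub_self]
  have hdiff := aeval_sub_aeval_mem (z := (y : A) • l) (fun i ↦ (x i).2)
    (fun i ↦ Ideal.mul_mem_right _ _ y.2) hcongr hg
  rw [aeval_smul_of_isHomogeneous hg] at hdiff
  have hmul : (y : A) ^ (n + 1) * MvPolynomial.aeval l g ∈ J' * J ^ n := by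
    simpa only [sub_sub_cancel] using sub_mem (hmJ hmem) hdiff
  obtain ⟨u, e, he, hue⟩ := Ideal.IsMaximal.exists_inv ‹m.IsMaximal› hgl
  refine hJ.pow_succ_notMem φ hy n ?_
  rw [← one_mul ((y : A) ^ (n + 1)), ← hue, add_mul, mul_assoc, mul_comm (MvPolynomial.aeval l g)]
  exact add_mem (Ideal.mul_mem_left _ _ hmul)
    (hmJ (Ideal.mul_mem_mul he (Ideal.pow_mem_pow y.2 _)))

theorem IsBasicIdeal.aeval_mem_of_aeval_mem (hJ : IsBasicIdeal J) {x : σ → J} (φ : J →ₗ[A] A ⧸ m)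
    {l : σ → A} (hφ : ∀ i, φ (x i) = Ideal.Quotient.mk m (l i)) {g : MvPolynomial σ A} {n : ℕ}
    (hg : g.IsHomogeneous n) (hmem : MvPolynomial.aeval (fun i ↦ (x i : A)) g ∈ m * J ^ n) :
    MvPolynomial.aeval l g ∈ m := by
  have hzero (w : σ → A) : MvPolynomial.aeval (0 : σ → A) g = 0 ^ n * MvPolynomial.aeval w g := by
    simpa only [zero_smul] using aeval_smul_of_isHomogeneous hg 0 w
  rcases n with _ | n
  · simp only [pow_zero, one_mul, Ideal.one_eq_top, Ideal.mul_top] at hzero hmem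
    rwa [← hzero, hzero fun i ↦ (x i : A)]
  by_cases hl : ∀ i, l i ∈ m
  · have hl0 (i : σ) : l i - (0 : σ → A) i ∈ m := by simpa using hl i
    have := aeval_sub_aeval_mem (J := ⊤) (z := 0) (fun _ ↦ Submodule.mem_top)
      (fun _ ↦ Submodule.mem_top) hl0 hg
    rwa [hzero l, zero_pow n.succ_ne_zero, zero_mul, sub_zero, Ideal.top_pow, Ideal.mul_top]
      at this
  · push Not at hl
    obtain ⟨i, hi⟩ := hl
    obtain ⟨c, d, hd, hcd⟩ := Ideal.IsMaximal.exists_inv ‹m.IsMaximal› hi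
    refine hJ.aeval_mem_of_apply_eq_one φ hφ (y := c • x i) ?_ hg hmem
    rw [map_smul, hφ, Algebra.smul_def, Ideal.Quotient.algebraMap_eq, ← map_mul,
      ← map_one (Ideal.Quotient.mk m), ← hcd, map_add, Ideal.Quotient.eq_zero_iff_mem.2 hd,
      add_zero]

theorem IsBasicIdeal.map_eq_zero_of_aeval_mem [Infinite (A ⧸ m)] (hJ : IsBasicIdeal J)
    (hx : ∀ i, Submodule.Quotient.mk (x i) = B i) {g : MvPolynomial σ A} {n : ℕ}
    (hg : g.IsHomogeneous n) (hmem : MvPolynomial.aeval (fun i ↦ (x i : A)) g ∈ m * J ^ n) :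
    MvPolynomial.map (Ideal.Quotient.mk m) g = 0 := by
  refine MvPolynomial.funext fun v ↦ ?_
  obtain ⟨φ, hφ⟩ := exists_linearMap_apply_eq hx v
  choose l hl using fun i ↦ Ideal.Quotient.mk_surjective (v i)
  have := hJ.aeval_mem_of_aeval_mem φ (fun i ↦ (hφ i).trans (hl i).symm) hg hmem
  obtain rfl : (fun i ↦ Ideal.Quotient.mk m (l i)) = v := funext hl
  rw [map_zero, MvPolynomial.eval_map, ← Function.comp_def, ← MvPolynomial.eval₂_comp]
  exact Ideal.Quotient.eq_zero_iff_mem.2 this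

end AnalyticIndependence

section FiberCone

variable {A : Type*} [CommRing A] {σ : Type*}

theorem aeval_monomial_one_of_isHomogeneous {g : MvPolynomial σ A} {n : ℕ}
    (hg : g.IsHomogeneous n) (x : σ → A) :
    MvPolynomial.aeval (fun i ↦ monomial 1 (x i)) g = monomial n (MvPolynomial.aeval x g) := by
  have hx : (fun i ↦ monomial 1 (x i)) = (X : A[X]) • (algebraMap A A[X] ∘ x) := by
    ext1 i
    rw [Pi.smul_apply, Function.comp_apply, algebraMap_eq, smul_eq_mul, X_mul_C,
      C_mul_X_eq_monomial]
  rw [hx, aeval_smul_of_isHomogeneous hg, MvPolynomial.aeval_algebraMap_apply, algebraMap_eq,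
    X_pow_mul_C, C_mul_X_pow_eq_monomial]

theorem coeff_aeval_monomial_one (g : MvPolynomial σ A) (x : σ → A) (n : ℕ) :
    (MvPolynomial.aeval (fun i ↦ monomial 1 (x i)) g).coeff n
      = MvPolynomial.aeval x (MvPolynomial.homogeneousComponent n g) := by
  conv_lhs => rw [← MvPolynomial.sum_homogeneousComponent g]
  simp only [map_sum, finsetSum_coeff, coeff_monomial, Finset.sum_ite_eq', Finset.mem_range,
    aeval_monomial_one_of_isHomogeneous (MvPolynomial.homogeneousComponent_isHomogeneous _ g)]
  refine ite_eq_left_iff.2 fun h ↦ ?_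
  rw [MvPolynomial.homogeneousComponent_eq_zero _ _ (by omega), map_zero]

theorem eval_monomial_appell (a : ℕ → A) (b : A) (n : ℕ) :
    (appell (fun i ↦ monomial i (a i)) n).eval (monomial 1 b)
      = monomial n ((appell a n).eval b) := by
  rw [eval_appell, eval_appell, map_sum]
  refine Finset.sum_congr rfl fun i hi ↦ ?_
  have hin : i + 1 * (n - i) = n := by
    rw [one_mul, Nat.add_sub_cancel' (Finset.mem_range_succ_iff.1 hi)]
  rw [monomial_pow, mul_assoc, monomial_mul_monomial, hin, ← C_eq_natCast, C_mul_monomial,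
    mul_assoc]

theorem coeff_pow_of_coeff_zero_eq_zero {p : A[X]} (h : p.coeff 0 = 0) (n : ℕ) :
    (p ^ n).coeff n = p.coeff 1 ^ n := by
  obtain ⟨p, rfl⟩ := X_dvd_iff.2 h
  rw [mul_pow, coeff_X_pow_mul', if_pos le_rfl, Nat.sub_self, coeff_X_mul,
    coeff_zero_eq_eval_zero, eval_pow, ← coeff_zero_eq_eval_zero]

/-- The ideal `m A[L t]` of the Rees algebra of `L`, whose quotient is the fiber cone. It is
described by coefficients: the one of `t ^ n` has to lie in `m L ^ n`. -/
def reesFiberIdeal (m L : Ideal A) : Ideal (reesAlgebra L) where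
  carrier := {p | ∀ n, (p : A[X]).coeff n ∈ m * L ^ n}
  add_mem' hp hq n := by
    rw [Subalgebra.coe_add, coeff_add]
    exact add_mem (hp n) (hq n)
  zero_mem' n := by simp
  smul_mem' c p hp n := by
    rw [smul_eq_mul, Subalgebra.coe_mul, coeff_mul]
    refine Ideal.sum_mem _ fun ij hij ↦ ?_
    have := Ideal.mul_mem_mul (c.2 ij.1) (hp ij.2)
    rwa [mul_left_comm, ← pow_add, Finset.HasAntidiagonal.mem_antidiagonal.1 hij] at this

/-- The fiber cone `⨁ L ^ n / m L ^ n` of `L` at `m`, as a quotient of the Rees algebra. -/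
abbrev ReesFiber (m L : Ideal A) : Type _ :=
  reesAlgebra L ⧸ reesFiberIdeal m L

/-- The element `a t ^ n` of the Rees algebra of `L`, for `a ∈ L ^ n`. -/
noncomputable def reesMonomial {L : Ideal A} (n : ℕ) (a : A) (ha : a ∈ L ^ n) : reesAlgebra L :=
  ⟨monomial n a, reesAlgebra.monomial_mem.2 ha⟩

variable {m J L : Ideal A}

theorem mem_reesFiberIdeal {p : reesAlgebra L} :
    p ∈ reesFiberIdeal m L ↔ ∀ n, (p : A[X]).coeff n ∈ m * L ^ n :=
  Iff.rfl

theorem mem_reesFiberIdeal_of_eq_monomial {p : reesAlgebra L} {n : ℕ} {a : A}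
    (hp : (p : A[X]) = monomial n a) (ha : a ∈ m * L ^ n) : p ∈ reesFiberIdeal m L := by
  intro k
  rw [hp, coeff_monomial]
  split_ifs with h
  exacts [h ▸ ha, zero_mem _]

theorem le_comap_reesFiberIdeal :
    m ≤ (reesFiberIdeal m L).comap (algebraMap A (reesAlgebra L)) := fun c hc ↦
  mem_reesFiberIdeal_of_eq_monomial (n := 0) (a := c) rfl (by simpa using hc)

theorem eval_reesMonomial_appell {a : ℕ → A} (ha : ∀ i, a i ∈ L ^ i) {b : A} (hb : b ∈ L ^ 1)
    {n : ℕ} (h : (appell a n).eval b = 0) :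
    (appell (fun i ↦ reesMonomial i (a i) (ha i)) n).eval (reesMonomial 1 b hb) = 0 := by
  apply Subtype.val_injective
  have := eval_monomial_appell a b n
  rw [h, map_zero] at this
  rw [← Subalgebra.coe_val, ← RingHom.coe_coe, ← eval_map_apply, appell_map, map_zero]
  exact this

theorem exists_coeff_one_pow_mem_of_isNilpotent [m.IsPrime] {p : reesAlgebra L}
    (hp : IsNilpotent (Ideal.Quotient.mk (reesFiberIdeal m L) p)) :
    ∃ N, (p : A[X]).coeff 1 ^ N ∈ m * L ^ N := by
  obtain ⟨N, hN⟩ := hp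
  set c := (p : A[X]).coeff 0 with hc
  have hcm : c ∈ m := by
    rw [← map_pow, Ideal.Quotient.eq_zero_iff_mem] at hN
    have h0 := hN 0
    rw [pow_zero, Ideal.one_eq_top, Ideal.mul_top, SubmonoidClass.coe_pow,
      coeff_zero_eq_eval_zero, eval_pow, ← coeff_zero_eq_eval_zero] at h0
    exact Ideal.IsPrime.mem_of_pow_mem inferInstance _ h0
  have hmk : Ideal.Quotient.mk (reesFiberIdeal m L) (p - algebraMap A (reesAlgebra L) c)
      = Ideal.Quotient.mk _ p := by
    rw [Ideal.Quotient.mk_eq_mk_iff_sub_mem, sub_sub_cancel_left]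
    exact neg_mem (le_comap_reesFiberIdeal hcm)
  rw [← hmk, ← map_pow, Ideal.Quotient.eq_zero_iff_mem] at hN
  refine ⟨N, ?_⟩
  have := hN N
  rw [SubmonoidClass.coe_pow, coeff_pow_of_coeff_zero_eq_zero (by simp [hc])] at this
  simpa [coeff_C] using this

/-- The `A`-algebra map `A[σ] → A[L t]` sending the variable `i` to `x i t`. It turns homogeneous
polynomials into elements of the Rees algebra of the same degree. -/
noncomputable def reesEval (x : σ → A) (hx : ∀ i, x i ∈ L) :
    MvPolynomial σ A →ₐ[A] reesAlgebra L :=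
  MvPolynomial.aeval fun i ↦ reesMonomial 1 (x i) (by simpa using hx i)

theorem coe_reesEval (x : σ → A) (hx : ∀ i, x i ∈ L) (g : MvPolynomial σ A) :
    (reesEval x hx g : A[X]) = MvPolynomial.aeval (fun i ↦ monomial 1 (x i)) g :=
  MvPolynomial.comp_aeval_apply _ (reesAlgebra L).val g

/-- The map `(A / m)[σ] → ⨁ L ^ n / m L ^ n` induced by `reesEval`. When the `x i` lift a basis of
`J / m J` for a basic ideal `J`, it embeds a polynomial ring in the fiber cone. -/
noncomputable def fiberEval (m : Ideal A) (x : σ → A) (hx : ∀ i, x i ∈ L) :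
    MvPolynomial σ (A ⧸ m) →+* ReesFiber m L :=
  MvPolynomial.eval₂Hom
    (Ideal.quotientMap (reesFiberIdeal m L) (algebraMap A (reesAlgebra L)) le_comap_reesFiberIdeal)
    fun i ↦ Ideal.Quotient.mk _ (reesMonomial 1 (x i) (by simpa using hx i))

theorem fiberEval_map (x : σ → A) (hx : ∀ i, x i ∈ L) (g : MvPolynomial σ A) :
    fiberEval m x hx (MvPolynomial.map (Ideal.Quotient.mk m) g)
      = Ideal.Quotient.mk _ (reesEval x hx g) := by
  have : (fiberEval m x hx).comp (MvPolynomial.map (Ideal.Quotient.mk m))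
      = (Ideal.Quotient.mk _).comp (reesEval x hx).toRingHom := by
    refine MvPolynomial.ringHom_ext (fun c ↦ ?_) fun i ↦ ?_
    · simp only [fiberEval, reesEval, RingHom.comp_apply, MvPolynomial.map_C,
        MvPolynomial.coe_eval₂Hom, MvPolynomial.eval₂_C, AlgHom.toRingHom_eq_coe,
        RingHom.coe_coe, MvPolynomial.aeval_C]
      exact Ideal.quotientMap_mk
    · simp [fiberEval, reesEval]
  exact RingHom.congr_fun this g

theorem exists_pow_mem_mul_pow_add (hm : m ≤ L.radical) {n : ℕ} {z : A} (hz : z ∈ m * L ^ n)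
    (r : ℕ) : ∃ k, 0 < k ∧ z ^ k ∈ m * L ^ (n * k + r) := by
  obtain ⟨T, T', hT, hT', hz⟩ := Submodule.mem_span_mul_finite_of_mem_mul hz
  rw [← Submodule.span_mul_span] at hz
  have hTm : Ideal.span (T : Set A) ≤ m := Ideal.span_le.2 hT
  obtain ⟨e, he⟩ := Ideal.exists_pow_le_of_le_radical_of_fg (hTm.trans hm) ⟨T, rfl⟩
  refine ⟨e * r + 1, Nat.succ_pos _, ?_⟩
  have hle : (Ideal.span (T : Set A) * L ^ n) ^ (e * r + 1) ≤ m * L ^ (n * (e * r + 1) + r) :=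
    calc (Ideal.span (T : Set A) * L ^ n) ^ (e * r + 1)
        = Ideal.span T * ((Ideal.span T ^ e) ^ r * L ^ (n * (e * r + 1))) := by
          rw [mul_pow, ← pow_mul, ← pow_mul]; ring
      _ ≤ m * (L ^ r * L ^ (n * (e * r + 1))) := by gcongr
      _ = m * L ^ (n * (e * r + 1) + r) := by rw [← pow_add, add_comm]
  exact hle (Ideal.pow_mem_pow (Ideal.mul_mono_right (Ideal.span_le.2 hT') hz) _)

theorem IsPowReduction.exists_pow_mem_pow_succ (hJL : IsPowReduction J L) (hm : m ≤ L.radical)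
    {c : A} (hc : c ∈ L) {N : ℕ} (hcN : c ^ N ∈ m * L ^ N) :
    ∃ n, 0 < n ∧ c ^ n ∈ J ^ (n + 1) := by
  have hmem : c ^ (N + 1) ∈ m * L ^ (N + 1) := by
    rw [pow_succ, pow_succ, ← mul_assoc]
    exact Ideal.mul_mem_mul hcN hc
  obtain ⟨r, hr⟩ := hJL.exists_pow_add_le
  obtain ⟨k, hk, hkm⟩ := exists_pow_mem_mul_pow_add hm hmem (r + 1)
  refine ⟨(N + 1) * k, Nat.mul_pos N.succ_pos hk, hr _ ?_⟩
  rw [pow_mul, add_assoc, add_comm 1 r]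
  exact Ideal.mul_le_right hkm

theorem pow_le_span_pow_sup_mul {s : Set A} (h : J = Ideal.span s ⊔ m * J) (n : ℕ) :
    J ^ n ≤ Ideal.span s ^ n ⊔ m * J ^ n := by
  rcases n with _ | n
  · simp
  · have := sup_pow_succ_le (m * J) (Ideal.span s) n
    rwa [sup_comm, ← h, mul_assoc, ← pow_succ', sup_comm] at this

theorem mk_reesMonomial_mem_range_fiberEval {x : σ → A} (hx : ∀ i, x i ∈ L) {n : ℕ} {a : A}
    (haL : a ∈ L ^ n) (ha : a ∈ Ideal.span (Set.range x) ^ n ⊔ m * L ^ n) :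
    Ideal.Quotient.mk (reesFiberIdeal m L) (reesMonomial n a haL) ∈ (fiberEval m x hx).range := by
  obtain ⟨_, hg, c, hc, rfl⟩ := Submodule.mem_sup.1 ha
  obtain ⟨g, hghom, rfl⟩ := (Ideal.mem_span_pow_iff_exists_isHomogeneous x _).1 hg
  refine ⟨MvPolynomial.map (Ideal.Quotient.mk m) g, ?_⟩
  rw [fiberEval_map, Eq.comm, Ideal.Quotient.mk_eq_mk_iff_sub_mem]
  refine mem_reesFiberIdeal_of_eq_monomial ?_ hc
  rw [AddSubgroupClass.coe_sub, coe_reesEval, aeval_monomial_one_of_isHomogeneous hghom]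
  exact (map_sub (monomial n) _ _).symm.trans (congrArg _ (add_sub_cancel_left _ _))

theorem IsBasicIdeal.fiberEval_injective [m.IsMaximal] [Infinite (A ⧸ m)] (hJ : IsBasicIdeal J)
    {B : Module.Basis σ (A ⧸ m) (J ⧸ (m • ⊤ : Submodule A J))} {x : σ → J}
    (hx : ∀ i, Submodule.Quotient.mk (x i) = B i) (hJL : IsPowReduction J L)
    (hm : m ≤ L.radical) :
    Function.Injective (fiberEval m (fun i ↦ (x i : A)) fun i ↦ hJL.1 (x i).2) := by
  refine (injective_iff_map_eq_zero _).2 fun f hf ↦ ?_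
  obtain ⟨g, rfl⟩ := MvPolynomial.map_surjective _ Ideal.Quotient.mk_surjective f
  rw [fiberEval_map, Ideal.Quotient.eq_zero_iff_mem, mem_reesFiberIdeal] at hf
  rw [← MvPolynomial.sum_homogeneousComponent g, map_sum]
  refine Finset.sum_eq_zero fun n _ ↦ ?_
  have hn := hf n
  rw [coe_reesEval, coeff_aeval_monomial_one] at hn
  obtain ⟨r, hr⟩ := hJL.exists_pow_add_le
  obtain ⟨k, -, hk⟩ := exists_pow_mem_mul_pow_add hm hn r
  have := hJ.map_eq_zero_of_aeval_mem hx
    ((MvPolynomial.homogeneousComponent_isHomogeneous n g).pow k)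
    (by rw [map_pow]; exact Ideal.mul_mono_right (hr _) hk)
  rw [map_pow] at this
  exact eq_zero_of_pow_eq_zero this

end FiberCone

section Rationality

theorem eq_of_X_sub_C_pow_dvd {k : Type*} [Field k] {F : k[X]} (hF : F ≠ 0) {n : ℕ}
    (hdeg : F.natDegree < 2 * n) {b c : k} (hb : (X - C b) ^ n ∣ F) (hc : (X - C c) ^ n ∣ F) :
    b = c := by
  by_contra hne
  have hcop : IsCoprime ((X - C b) ^ n) ((X - C c) ^ n) :=
    (isCoprime_X_sub_C_of_isUnit_sub (sub_ne_zero.2 hne).isUnit).pow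
  have hle := natDegree_le_of_dvd (hcop.mul_dvd hb hc) hF
  rw [((monic_X_sub_C b).pow n).natDegree_mul ((monic_X_sub_C c).pow n), natDegree_pow,
    natDegree_pow, natDegree_X_sub_C, natDegree_X_sub_C] at hle
  omega

theorem isNilpotent_of_forall_algebraMap_residueField {B : Type*} [CommRing B] {b : B}
    (h : ∀ (Q : Ideal B) [Q.IsPrime], algebraMap B Q.ResidueField b = 0) : IsNilpotent b := by
  rw [← mem_nilradical, nilradical_eq_sInf, Submodule.mem_sInf]
  intro (Q : Ideal B) (hQ : Q.IsPrime)
  exact Ideal.algebraMap_residueField_eq_zero.1 (h Q)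

variable {S : Type*} [CommRing S] [IsDomain S] [IsIntegrallyClosed S] [CharZero S]

section

variable {L : Type*} [Field L] [Algebra S L] [FaithfulSMul S L]

theorem aeval_derivative_minpoly_ne_zero {b : L} (hb : IsIntegral S b) :
    aeval b (derivative (minpoly S b)) ≠ 0 := by
  have hpos := minpoly.natDegree_pos hb
  intro h
  have hdvd := minpoly.isIntegrallyClosed_dvd hb h
  have hne : derivative (minpoly S b) ≠ 0 := fun h0 ↦ hpos.ne' (derivative_eq_zero.1 h0)
  exact (natDegree_derivative_lt hpos.ne').not_ge (natDegree_le_of_dvd hdvd hne)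

theorem minpoly_pow_dvd {b : L} (hb : IsIntegral S b) {n : ℕ} {F : S[X]}
    (h : (X - C b) ^ n ∣ F.map (algebraMap S L)) : minpoly S b ^ n ∣ F := by
  induction n generalizing F with
  | zero => exact one_dvd F
  | succ n ih =>
    have hroot : aeval b F = 0 := by
      rw [← eval_map_algebraMap]
      exact dvd_iff_isRoot.1 ((dvd_pow_self _ n.succ_ne_zero).trans h)
    obtain ⟨G, rfl⟩ := minpoly.isIntegrallyClosed_dvd hb hroot
    obtain ⟨M, hM⟩ : X - C b ∣ (minpoly S b).map (algebraMap S L) := by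
      rw [dvd_iff_isRoot, IsRoot.def, eval_map_algebraMap, minpoly.aeval]
    have hMb : ¬ X - C b ∣ M := by
      have := aeval_derivative_minpoly_ne_zero hb
      rw [← eval_map_algebraMap, ← derivative_map, hM] at this
      simpa [dvd_iff_isRoot] using this
    rw [Polynomial.map_mul, hM, mul_assoc, pow_succ'] at h
    have hG := (prime_X_sub_C b).pow_dvd_of_dvd_mul_left n hMb
      ((mul_dvd_mul_iff_left (X_sub_C_ne_zero b)).1 h)
    rw [pow_succ']
    exact mul_dvd_mul_left _ (ih hG)

theorem exists_algebraMap_eq_of_X_sub_C_pow_dvd {F : S[X]} (hF : F.Monic) {n : ℕ}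
    (hdeg : F.natDegree < 2 * n) {b : L} (h : (X - C b) ^ n ∣ F.map (algebraMap S L)) :
    ∃ s : S, algebraMap S L s = b ∧ (X - C s) ^ n ∣ F := by
  have hb : IsIntegral S b := by
    refine ⟨F, hF, ?_⟩
    rw [← aeval_def, ← eval_map_algebraMap]
    exact dvd_iff_isRoot.1 ((dvd_pow_self _ (by omega)).trans h)
  have hdvd := minpoly_pow_dvd hb h
  have hle := natDegree_le_of_dvd hdvd hF.ne_zero
  rw [(minpoly.monic hb).natDegree_pow] at hle
  have hlt : (minpoly S b).natDegree < 2 := by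
    refine lt_of_mul_lt_mul_left (a := n) ?_ n.zero_le
    omega
  have hone : (minpoly S b).natDegree = 1 := by
    have := minpoly.natDegree_pos hb
    omega
  obtain ⟨s, rfl⟩ := minpoly.natDegree_eq_one_iff.1 hone
  refine ⟨s, rfl, ?_⟩
  rwa [minpoly.eq_X_sub_C_of_algebraMap_inj s (FaithfulSMul.algebraMap_injective S L)] at hdvd

end

theorem exists_isNilpotent_sub {B : Type*} [CommRing B] {f : S →+* B}
    (hf : Function.Injective f) {F : S[X]} (hF : F.Monic) {n : ℕ}
    (hdeg : F.natDegree < 2 * n) {b : B} (h : (X - C b) ^ n ∣ F.map f) :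
    ∃ s, IsNilpotent (b - f s) := by
  have hmap {k : Type _} [Field k] (g : B →+* k) :
      (X - C (g b)) ^ n ∣ F.map (g.comp f) := by
    simpa [Polynomial.map_map] using Polynomial.map_dvd g h
  -- The residue field of a prime over `0` yields `s`; in every other residue field `F` has too
  -- small a degree to have a second root of multiplicity `n`.
  obtain ⟨P, hP, hPf⟩ := Ideal.exists_comap_eq_of_mem_minimalPrimes_of_injective hf ⊥
    (by rw [IsDomain.minimalPrimes_eq_singleton_bot]; rfl)
  obtain ⟨s, -, hs⟩ : ∃ s, algebraMap B P.ResidueField (f s) = algebraMap B P.ResidueField b ∧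
      (X - C s) ^ n ∣ F := by
    let _ : Algebra S P.ResidueField := ((algebraMap B P.ResidueField).comp f).toAlgebra
    have : FaithfulSMul S P.ResidueField := by
      refine (faithfulSMul_iff_algebraMap_injective _ _).2 ((injective_iff_map_eq_zero _).2 ?_)
      intro s hs
      have hsP : f s ∈ P := Ideal.algebraMap_residueField_eq_zero.1 hs
      rwa [← Ideal.mem_comap, hPf] at hsP
    exact exists_algebraMap_eq_of_X_sub_C_pow_dvd hF hdeg (hmap _)
  refine ⟨s, isNilpotent_of_forall_algebraMap_residueField fun Q _ ↦ ?_⟩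
  rw [map_sub, sub_eq_zero]
  set g := algebraMap B Q.ResidueField
  refine eq_of_X_sub_C_pow_dvd (hF.map (g.comp f)).ne_zero ?_ (hmap g) ?_
  · rwa [hF.natDegree_map]
  · simpa using Polynomial.map_dvd (g.comp f) hs

theorem exists_isNilpotent_sub_of_eval_appell_eq_zero {B : Type*} [CommRing B] {f : S →+* B}
    (hf : Function.Injective f) {a : ℕ → S} (h0 : a 0 = 1) {b : B} {q : ℕ}
    (h : ∀ n, q + 1 ≤ n → n ≤ 2 * q + 1 → (appell (fun i ↦ f (a i)) n).eval b = 0) :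
    ∃ s, IsNilpotent (b - f s) := by
  have hmonic := isMonicOfDegree_appell h0 (2 * q + 1)
  have hdvd := X_sub_C_pow_dvd_appell h
  rw [← appell_map] at hdvd
  refine exists_isNilpotent_sub hf hmonic.monic ?_ hdvd
  rw [hmonic.natDegree_eq]
  omega

end Rationality

section WeakSubintegralClosure

variable {A : Type*} [CommRing A] {m J L : Ideal A} [m.IsMaximal] [CharZero (A ⧸ m)]

theorem IsBasicIdeal.exists_isNilpotent_mk_sub {σ : Type*} (hJ : IsBasicIdeal J)
    {B : Module.Basis σ (A ⧸ m) (J ⧸ (m • ⊤ : Submodule A J))} {x : σ → J}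
    (hx : ∀ i, Submodule.Quotient.mk (x i) = B i) (hJL : IsPowReduction J L)
    (hm : m ≤ L.radical) {a : ℕ → A} (h0 : a 0 = 1) (ha : ∀ i, a i ∈ J ^ i) {b : A}
    (hb : b ∈ L ^ 1) {q : ℕ} (h : ∀ n, q + 1 ≤ n → n ≤ 2 * q + 1 → (appell a n).eval b = 0) :
    ∃ g : MvPolynomial σ A, IsNilpotent (Ideal.Quotient.mk (reesFiberIdeal m L)
      (reesMonomial 1 b hb - reesEval (fun i ↦ (x i : A)) (fun i ↦ hJL.1 (x i).2) g)) := by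
  have : Infinite (A ⧸ m) := CharZero.infinite _
  set f := fiberEval m (fun i ↦ (x i : A)) fun i ↦ hJL.1 (x i).2 with hf
  have hinj : Function.Injective f := hJ.fiberEval_injective hx hJL hm
  have haL (i : ℕ) : a i ∈ L ^ i := Ideal.pow_right_mono hJL.1 i (ha i)
  choose α hα using fun i ↦ mk_reesMonomial_mem_range_fiberEval (fun i ↦ hJL.1 (x i).2) (haL i)
    (sup_le_sup_left (Ideal.mul_mono_right (Ideal.pow_right_mono hJL.1 i)) _
      (pow_le_span_pow_sup_mul (eq_span_range_sup_mul hx) i (ha i)))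
  have hα0 : α 0 = 1 := by
    apply hinj
    rw [hα, map_one, ← map_one (Ideal.Quotient.mk _)]
    exact congrArg _ (Subtype.ext (by simp [reesMonomial, h0]))
  obtain ⟨s, hs⟩ := exists_isNilpotent_sub_of_eval_appell_eq_zero hinj hα0
    (b := Ideal.Quotient.mk _ (reesMonomial 1 b hb)) (q := q) fun n hn hn' ↦ by
      rw [funext hα, ← appell_map, eval_map_apply, eval_reesMonomial_appell haL hb (h n hn hn'),
        map_zero]
  obtain ⟨g, rfl⟩ := MvPolynomial.map_surjective _ Ideal.Quotient.mk_surjective s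
  rw [hf, fiberEval_map, ← map_sub] at hs
  exact ⟨g, hs⟩

theorem IsBasicIdeal.exists_sub_pow_mem (hJ : IsBasicIdeal J) (hm : m ≤ J.radical) {b : A}
    (hb : WSubIdeal J b) : ∃ j ∈ J, ∃ n, 0 < n ∧ (b - j) ^ n ∈ J ^ (n + 1) := by
  set L := J ⊔ Ideal.span {b}
  have hJL : IsPowReduction J L := hb.integralOverIdeal.isPowReduction_sup_span
  have hbL : b ∈ L := Ideal.mem_sup_right (Ideal.mem_span_singleton_self b)
  have hmL : m ≤ L.radical := hm.trans (Ideal.radical_mono hJL.1)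
  obtain ⟨⟨σ, B⟩⟩ := Module.Free.exists_basis (A ⧸ m) (J ⧸ (m • ⊤ : Submodule A J))
  choose x hx using fun i ↦ Submodule.Quotient.mk_surjective (m • ⊤ : Submodule A J) (B i)
  obtain ⟨q, a, h0, ha, h⟩ := wSubIdeal_iff_appell.1 hb
  obtain ⟨g, hg⟩ := hJ.exists_isNilpotent_mk_sub hx hJL hmL h0 ha (by rwa [pow_one]) h
  obtain ⟨N, hN⟩ := exists_coeff_one_pow_mem_of_isNilpotent hg
  set j := MvPolynomial.aeval (fun i ↦ (x i : A)) (MvPolynomial.homogeneousComponent 1 g)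
  have hj : j ∈ J := by
    have := (Ideal.mem_span_pow_iff_exists_isHomogeneous (n := 1) (fun i ↦ (x i : A)) j).2
      ⟨_, MvPolynomial.homogeneousComponent_isHomogeneous 1 g, rfl⟩
    rw [pow_one] at this
    exact (le_sup_left.trans_eq (eq_span_range_sup_mul hx).symm) this
  have hbj : (b - j) ^ N ∈ m * L ^ N := by
    rwa [AddSubgroupClass.coe_sub, coeff_sub, coe_reesEval, coeff_aeval_monomial_one,
      reesMonomial, coeff_monomial_same] at hN
  exact ⟨j, hj, hJL.exists_pow_mem_pow_succ hmL (sub_mem hbL (hJL.1 hj)) hbj⟩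

end WeakSubintegralClosure

theorem weakSubintegralClosure_of_minimalReduction'_general {A : Type*} [CommRing A]
    (m : Ideal A) [m.IsMaximal] [CharZero (A ⧸ m)]
    (I : Ideal A) (hIfg : I.FG) (hI : I.radical = m)
    (J : Ideal A) (hJ : IsMinimalReduction J I)
    (K : Ideal A) (hK : ∀ x : A, x ∈ K ↔ MemIgt I x) :
    ∀ x : A, x ∈ J + K ↔ WSubIdeal J x := by
  have hJI : IsPowReduction J I := (isReduction_iff_isPowReduction hIfg).1 hJ.1
  obtain ⟨r, hr⟩ := hJI.exists_pow_add_le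
  refine fun x ↦ ⟨fun hx ↦ ?_, fun hx ↦ ?_⟩
  · obtain ⟨j, hj, c, hc, rfl⟩ := Submodule.mem_sup.1 hx
    obtain ⟨q, hq⟩ := ((hK c).1 hc).exists_pow_mem r
    exact wSubIdeal_add_of_pow_mem hj fun n hn ↦ hr n (hq n hn)
  · have hm : m ≤ J.radical := by
      have hIJ : I ^ (1 + r) ≤ J := (hr 1).trans_eq (pow_one J)
      rw [← hI, ← Ideal.radical_pow I (n := 1 + r) (by omega)]
      exact Ideal.radical_mono hIJ
    obtain ⟨j, hj, n, hn, hmem⟩ := (hJ.isBasicIdeal hIfg).exists_sub_pow_mem hm hx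
    rw [← add_sub_cancel j x]
    exact Submodule.add_mem_sup hj
      ((hK _).2 (memIgt_of_pow_mem hn (Ideal.pow_right_mono hJI.1 _ hmem)))

/-- Corollary to Theorem 4.8: let `A` be a Noetherian ring and `m` a
maximal ideal with `A/m` algebraically closed of characteristic 0.  If `I` is `m`-primary
(i.e. `rad I = m`) and `J` is a minimal reduction of `I`, then `J + I_> = *J`.
Here `K` is the ideal `I_>` (hypothesis `hK`). -/
theorem weakSubintegralClosure_of_minimalReduction' {A : Type*} [CommRing A]
    [IsNoetherianRing A] (m : Ideal A) [m.IsMaximal]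
    [IsAlgClosed (A ⧸ m)] [CharZero (A ⧸ m)]
    (I : Ideal A) (hI : I.radical = m)
    (J : Ideal A) (hJ : IsMinimalReduction J I)
    (K : Ideal A) (hK : ∀ x : A, x ∈ K ↔ MemIgt I x) :
    ∀ x : A, x ∈ J + K ↔ WSubIdeal J x :=
  weakSubintegralClosure_of_minimalReduction'_general m I (IsNoetherian.noetherian I) hI J hJ K hK
end

section
/- Let (A,m,k) be a Noetherian local ring of Krull dimension d and let I be an m-primary ideal of A. Then the A-module I/(I_> ∩ I) is annihilated by m (hence is a k-vector space), and dim_k I/(I_> ∩ I) ≥ d. -/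
open Filter Polynomial

/-!
By Fekete's lemma `v̄_I(a) = sup_n ord_I(a ^ n) / n`, so `a ∈ I_>` exactly when
`a ^ N ∈ I ^ (N + 1)` for some `N > 0`. This condition passes from elements to finitely generated
ideals, so `K = I_>` itself satisfies `K ^ N ≤ I ^ (N + 1)`. If `t ⊆ I` generates `I` modulo `K`,
then `I ^ N ≤ (t) + I ^ (N + 1)`, and Nakayama's lemma gives `I ^ N ≤ (t)`; hence `(t)` and `I` have
the same radical and `t` has at least `ht I` elements by Krull's height theorem. When `t` is
irredundant, a relation modulo `K` cannot have a unit coefficient.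
-/

section Fekete

lemma tendsto_natCast_div_div_atTop {n : ℕ} (hn : 0 < n) :
    Tendsto (fun m : ℕ ↦ ((m / n : ℕ) : ENNReal) / m) atTop (nhds (n : ENNReal)⁻¹) := by
  have hreal : Tendsto (fun m : ℕ ↦ ((m / n : ℕ) : ℝ) / m) atTop (nhds (n : ℝ)⁻¹) := by
    refine ((tendsto_nat_floor_mul_div_atTop (R := ℝ) (a := (n : ℝ)⁻¹) (by positivity)).comp
      tendsto_natCast_atTop_atTop).congr fun m ↦ ?_
    rw [Function.comp_apply, inv_mul_eq_div, Nat.floor_div_eq_div]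
  have hn' : (0 : ℝ) < n := Nat.cast_pos.2 hn
  rw [← ENNReal.ofReal_natCast n, ← ENNReal.ofReal_inv_of_pos hn']
  refine (ENNReal.tendsto_ofReal hreal).congr' ?_
  filter_upwards [eventually_gt_atTop 0] with m hm
  rw [ENNReal.ofReal_div_of_pos (Nat.cast_pos.2 hm), ENNReal.ofReal_natCast,
    ENNReal.ofReal_natCast]

variable {u : ℕ → ENNReal}

lemma natCast_mul_le_of_superadditive (hu : ∀ m n, u m + u n ≤ u (m + n)) (q n r : ℕ) :
    q * u n ≤ u (n * q + r) := by
  induction q with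
  | zero => simp only [Nat.cast_zero, zero_mul, zero_le]
  | succ q ih =>
    calc ((q + 1 : ℕ) : ENNReal) * u n = q * u n + u n := by push_cast; ring
      _ ≤ u (n * q + r) + u n := by gcongr
      _ ≤ u (n * q + r + n) := hu _ _
      _ = u (n * (q + 1) + r) := by congr 1; ring

lemma div_le_liminf_of_superadditive (hu : ∀ m n, u m + u n ≤ u (m + n)) {n : ℕ} (hn : 0 < n) :
    u n / n ≤ liminf (fun m ↦ u m / (m : ENNReal)) atTop := by
  have hlim : Tendsto (fun m : ℕ ↦ ((m / n : ℕ) : ENNReal) / m * u n) atTop (nhds (u n / n)) := by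
    rw [ENNReal.div_eq_inv_mul]
    exact ENNReal.Tendsto.mul_const (tendsto_natCast_div_div_atTop hn)
      (Or.inl (ENNReal.inv_ne_zero.2 (ENNReal.natCast_ne_top n)))
  rw [← hlim.liminf_eq]
  refine liminf_le_liminf (Eventually.of_forall fun m ↦ ?_)
  calc ((m / n : ℕ) : ENNReal) / m * u n = (m / n : ℕ) * u n / m := ENNReal.mul_div_right_comm.symm
    _ ≤ u (n * (m / n) + m % n) / m := by gcongr; exact natCast_mul_le_of_superadditive hu _ _ _
    _ = u m / m := by rw [Nat.div_add_mod]

theorem tendsto_div_iSup_of_superadditive (hu : ∀ m n, u m + u n ≤ u (m + n)) :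
    Tendsto (fun n ↦ u n / (n : ENNReal)) atTop
      (nhds (⨆ (n : ℕ) (_ : 0 < n), u n / (n : ENNReal))) := by
  refine tendsto_of_le_liminf_of_limsup_le
    (iSup₂_le fun n hn ↦ div_le_liminf_of_superadditive hu hn) ?_
  refine limsup_le_of_le (h := ?_)
  filter_upwards [eventually_gt_atTop 0] with n hn
  exact le_iSup₂ (f := fun (n : ℕ) (_ : 0 < n) ↦ u n / (n : ENNReal)) n hn

end Fekete

section SamuelFunction

variable {A : Type*} [CommRing A] {I : Ideal A} {a : A}

lemma le_ordI {n : ℕ} (h : a ∈ I ^ n) : (n : ℕ∞) ≤ ordI I a :=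
  le_iSup₂ (f := fun (n : ℕ) (_ : a ∈ I ^ n) ↦ (n : ℕ∞)) n h

lemma natCast_lt_ordI_iff {n : ℕ} : (n : ℕ∞) < ordI I a ↔ a ∈ I ^ (n + 1) := by
  refine ⟨fun h ↦ ?_, fun h ↦ (Nat.cast_lt.2 n.lt_succ_self).trans_le (le_ordI h)⟩
  simp only [ordI, lt_iSup_iff] at h
  obtain ⟨m, hm, hnm⟩ := h
  exact Ideal.pow_le_pow_right (Nat.cast_lt.1 hnm) hm

lemma ordI_add_le_ordI_mul (I : Ideal A) (a b : A) :
    ordI I a + ordI I b ≤ ordI I (a * b) := by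
  have : Nonempty {n : ℕ // a ∈ I ^ n} := ⟨⟨0, by simp⟩⟩
  have : Nonempty {n : ℕ // b ∈ I ^ n} := ⟨⟨0, by simp⟩⟩
  rw [ordI, ordI, iSup_subtype', iSup_subtype']
  refine ENat.iSup_add_iSup_le fun m n ↦ ?_
  exact_mod_cast le_ordI (pow_add I m.1 n.1 ▸ Ideal.mul_mem_mul m.2 n.2)

theorem tendsto_samuelSeq (I : Ideal A) (a : A) :
    Tendsto (samuelSeq I a) atTop (nhds (⨆ (n : ℕ) (_ : 0 < n), samuelSeq I a n)) := by
  refine tendsto_div_iSup_of_superadditive (u := fun n ↦ (ordI I (a ^ n) : ENNReal)) fun m n ↦ ?_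
  rw [pow_add]
  exact_mod_cast ordI_add_le_ordI_mul I (a ^ m) (a ^ n)

lemma one_lt_samuelSeq_iff {n : ℕ} (hn : 0 < n) :
    1 < samuelSeq I a n ↔ a ^ n ∈ I ^ (n + 1) := by
  rw [samuelSeq, ENNReal.lt_div_iff_mul_lt (Or.inl (Nat.cast_ne_zero.2 hn.ne'))
    (Or.inl (ENNReal.natCast_ne_top n)), one_mul, ← natCast_lt_ordI_iff]
  exact_mod_cast Iff.rfl

theorem memIgt_iff : MemIgt I a ↔ ∃ N, 0 < N ∧ a ^ N ∈ I ^ (N + 1) := by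
  have hsup : MemIgt I a ↔ 1 < ⨆ (n : ℕ) (_ : 0 < n), samuelSeq I a n :=
    ⟨fun ⟨_, hL, h⟩ ↦ tendsto_nhds_unique h (tendsto_samuelSeq I a) ▸ hL,
      fun h ↦ ⟨_, h, tendsto_samuelSeq I a⟩⟩
  simp only [hsup, lt_iSup_iff, exists_prop]
  exact exists_congr fun _ ↦ and_congr_right one_lt_samuelSeq_iff

theorem memIgt_mul_of_mem_radical {x : A} (hx : x ∈ I.radical) (ha : a ∈ I) :
    MemIgt I (x * a) := by
  obtain ⟨k, hk⟩ := hx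
  refine memIgt_iff.2 ⟨k + 1, k.succ_pos, ?_⟩
  rw [mul_pow, pow_succ' I, pow_succ x]
  exact Ideal.mul_mem_mul (I.mul_mem_right _ hk) (Ideal.pow_mem_pow ha _)

end SamuelFunction

section IdealPowers

variable {A : Type*} [CommSemiring A] {I K L : Ideal A}

lemma sup_pow_le_of_forall_mul_le {P : Ideal A} {n : ℕ}
    (h : ∀ i j, i + j = n → K ^ i * L ^ j ≤ P) : (K ⊔ L) ^ n ≤ P := by
  rw [← Submodule.add_eq_sup, add_pow]
  refine Finset.sum_induction _ (· ≤ P) (fun _ _ ↦ sup_le) bot_le fun i hi ↦ ?_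
  exact Ideal.mul_le_left.trans (h i (n - i) (Nat.add_sub_of_le (Finset.mem_range_succ_iff.1 hi)))

lemma pow_le_pow_mul_div {N M : ℕ} (h : K ^ N ≤ I ^ M) (i : ℕ) :
    K ^ i ≤ I ^ (M * (i / N)) :=
  calc K ^ i ≤ K ^ (N * (i / N)) := Ideal.pow_le_pow_right (Nat.mul_div_le i N)
    _ = (K ^ N) ^ (i / N) := pow_mul _ _ _
    _ ≤ (I ^ M) ^ (i / N) := Ideal.pow_right_mono h _
    _ = I ^ (M * (i / N)) := (pow_mul _ _ _).symm

lemma sq_add_lt_succ_mul_div_add_succ_mul_div {a b i j : ℕ} (ha : 0 < a) (hb : 0 < b)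
    (hij : i + j = (a + b) ^ 2) : (a + b) ^ 2 < (a + 1) * (i / a) + (b + 1) * (j / b) := by
  -- Rounding down loses at most `a` and `b`; the quotients themselves make up for that.
  have hquot : a + b ≤ i / a + j / b := by
    by_contra! hlt
    have hi : i < (a + b) * a := (Nat.div_lt_iff_lt_mul ha).1 (le_self_add.trans_lt hlt)
    have hj : j < (a + b) * b := (Nat.div_lt_iff_lt_mul hb).1 (le_add_self.trans_lt hlt)
    nlinarith
  have hi := Nat.lt_div_mul_add (a := i) ha
  have hj := Nat.lt_div_mul_add (a := j) hb
  linarith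

theorem exists_sup_pow_le_pow_succ (hK : ∃ N, 0 < N ∧ K ^ N ≤ I ^ (N + 1))
    (hL : ∃ N, 0 < N ∧ L ^ N ≤ I ^ (N + 1)) : ∃ N, 0 < N ∧ (K ⊔ L) ^ N ≤ I ^ (N + 1) := by
  obtain ⟨a, ha, hK⟩ := hK
  obtain ⟨b, hb, hL⟩ := hL
  refine ⟨(a + b) ^ 2, by positivity, sup_pow_le_of_forall_mul_le fun i j hij ↦ ?_⟩
  calc K ^ i * L ^ j ≤ I ^ ((a + 1) * (i / a)) * I ^ ((b + 1) * (j / b)) :=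
        Ideal.mul_mono (pow_le_pow_mul_div hK i) (pow_le_pow_mul_div hL j)
    _ = I ^ ((a + 1) * (i / a) + (b + 1) * (j / b)) := (pow_add _ _ _).symm
    _ ≤ I ^ ((a + b) ^ 2 + 1) :=
        Ideal.pow_le_pow_right (sq_add_lt_succ_mul_div_add_succ_mul_div ha hb hij)

end IdealPowers

section Nakayama

variable {A : Type*} [CommRing A] {I J K : Ideal A}

theorem pow_le_of_le_sup (hfg : I.FG) (hjac : I ≤ Ideal.jacobson ⊥) (hsup : I ≤ J ⊔ K) {N : ℕ}
    (hK : K ^ N ≤ I ^ (N + 1)) : I ^ N ≤ J := by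
  refine Submodule.le_of_le_smul_of_le_jacobson_bot hfg.pow hjac ?_
  calc I ^ N ≤ (J ⊔ K) ^ N := Ideal.pow_right_mono hsup N
    _ ≤ J ⊔ K ^ N := by
      refine sup_pow_le_of_forall_mul_le fun i j hij ↦ ?_
      rcases Nat.eq_zero_or_pos i with rfl | hi
      · rw [pow_zero, one_mul, ← hij, zero_add]
        exact le_sup_right
      · exact (Ideal.mul_le_left.trans (Ideal.pow_le_self hi.ne')).trans le_sup_left
    _ ≤ J ⊔ I • I ^ N := sup_le_sup_left (by rwa [smul_eq_mul, ← pow_succ']) _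

theorem radical_eq_of_le_sup (hfg : I.FG) (hjac : I ≤ Ideal.jacobson ⊥) (hJ : J ≤ I)
    (hsup : I ≤ J ⊔ K) {N : ℕ} (hN : 0 < N) (hK : K ^ N ≤ I ^ (N + 1)) :
    J.radical = I.radical := by
  refine le_antisymm (Ideal.radical_mono hJ) ?_
  rw [← Ideal.radical_pow I hN.ne']
  exact Ideal.radical_mono (pow_le_of_le_sup hfg hjac hsup hK)

end Nakayama

section SamuelIdealGT

variable {A : Type*} [CommRing A] {I K : Ideal A}

lemma memIgt_iff_span_singleton_pow_le {a : A} :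
    MemIgt I a ↔ ∃ N, 0 < N ∧ Ideal.span {a} ^ N ≤ I ^ (N + 1) := by
  simp only [memIgt_iff, Ideal.span_singleton_pow, Ideal.span_singleton_le_iff_mem]

lemma memIgt_of_mem_of_pow_le {a : A} (ha : a ∈ K) (hK : ∃ N, 0 < N ∧ K ^ N ≤ I ^ (N + 1)) :
    MemIgt I a :=
  have ⟨N, hN, hKN⟩ := hK
  memIgt_iff.2 ⟨N, hN, hKN (Ideal.pow_mem_pow ha N)⟩

/-- The ideal `I_>` of elements whose asymptotic Samuel function exceeds `1`. -/
def samuelIdealGT (I : Ideal A) : Ideal A where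
  carrier := {a | MemIgt I a}
  zero_mem' := memIgt_of_mem_of_pow_le (zero_mem ⊥) ⟨1, one_pos, by rw [pow_one]; exact bot_le⟩
  add_mem' {a b} ha hb :=
    memIgt_of_mem_of_pow_le
      (add_mem (Ideal.mem_sup_left (Ideal.mem_span_singleton_self a))
        (Ideal.mem_sup_right (Ideal.mem_span_singleton_self b)))
      (exists_sup_pow_le_pow_succ (memIgt_iff_span_singleton_pow_le.1 ha)
        (memIgt_iff_span_singleton_pow_le.1 hb))
  smul_mem' c a ha :=
    memIgt_of_mem_of_pow_le (Ideal.mul_mem_left _ c (Ideal.mem_span_singleton_self a))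
      (memIgt_iff_span_singleton_pow_le.1 ha)

theorem exists_pow_le_pow_succ_of_le_samuelIdealGT (hfg : K.FG) (hK : K ≤ samuelIdealGT I) :
    ∃ N, 0 < N ∧ K ^ N ≤ I ^ (N + 1) := by
  induction K, hfg using Submodule.fg_induction with
  | singleton a =>
    exact memIgt_iff_span_singleton_pow_le.1 (hK (Ideal.mem_span_singleton_self a))
  | sup K L _ _ ihK ihL =>
    exact exists_sup_pow_le_pow_succ (ihK (le_sup_left.trans hK)) (ihL (le_sup_right.trans hK))

end SamuelIdealGT

section Height

variable {A : Type*} [CommRing A] {I J : Ideal A}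

lemma height_eq_of_radical_eq (h : I.radical = J.radical) : I.height = J.height := by
  rw [Ideal.height_eq_inf_minimalPrimes, Ideal.height_eq_inf_minimalPrimes,
    ← Ideal.radical_minimalPrimes, h, Ideal.radical_minimalPrimes]

lemma height_le_card_of_radical_span_eq [IsNoetherianRing A] (hI : I ≠ ⊤) {t : Finset A}
    (h : (Ideal.span (t : Set A)).radical = I.radical) : I.height ≤ t.card := by
  have hne : Ideal.span (t : Set A) ≠ ⊤ := by
    rwa [ne_eq, ← Ideal.radical_eq_top, h, Ideal.radical_eq_top]
  calc I.height = (Ideal.span (t : Set A)).height := height_eq_of_radical_eq h.symm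
    _ ≤ (Ideal.span (t : Set A)).spanFinrank := Ideal.height_le_spanFinrank _ hne
    _ ≤ t.card := by
      rw [← Set.ncard_coe_finset]
      exact_mod_cast Submodule.spanFinrank_span_le_ncard_of_finite t.finite_toSet

end Height

section IrredundantGenerators

theorem exists_finset_irredundant_generators_mod {R M : Type*} [Semiring R] [AddCommMonoid M]
    [Module R M] {N : Submodule R M} (hN : N.FG) (K : Submodule R M) :
    ∃ t : Finset M, (t : Set M) ⊆ N ∧ N ≤ Submodule.span R t ⊔ K ∧
      ∀ x ∈ t, x ∉ Submodule.span R ((t : Set M) \ {x}) ⊔ K := by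
  classical
  obtain ⟨s, hs⟩ := hN
  obtain ⟨t, hts, ht⟩ := exists_minimal_le_of_wellFoundedLT
    (fun t : Finset M ↦ N ≤ Submodule.span R t ⊔ K) s (hs ▸ le_sup_left)
  refine ⟨t, fun x hx ↦ hs ▸ Submodule.subset_span (hts hx), ht.prop, fun x hx hmem ↦ ?_⟩
  rw [← Finset.coe_erase] at hmem
  have hle : Submodule.span R t ≤ Submodule.span R (t.erase x) ⊔ K := by
    rw [← Finset.insert_erase hx, Finset.coe_insert, Submodule.span_insert, sup_le_iff,
      Submodule.span_singleton_le_iff_mem, Finset.insert_erase hx]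
    exact ⟨hmem, le_sup_left⟩
  exact ht.not_prop_of_lt (Finset.erase_ssubset hx) (ht.prop.trans (sup_le hle le_sup_right))

variable {R M : Type*} [Ring R] [AddCommGroup M] [Module R M] {K : Submodule R M}

lemma not_isUnit_of_sum_smul_mem {ι : Type*} [Fintype ι] {c : ι → R} {x : ι → M} {j : ι}
    (hsum : ∑ i, c i • x i ∈ K) (hj : x j ∉ Submodule.span R (x '' {j}ᶜ) ⊔ K) :
    ¬IsUnit (c j) := by
  classical
  refine fun hunit ↦ hj ((Submodule.smul_mem_iff_of_isUnit _ hunit).1 ?_)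
  rw [← add_sub_cancel_right (c j • x j) (∑ i ∈ Finset.univ.erase j, c i • x i),
    Finset.add_sum_erase _ (fun i ↦ c i • x i) (Finset.mem_univ j)]
  refine sub_mem (Submodule.mem_sup_right hsum) (Submodule.mem_sup_left (sum_mem fun i hi ↦ ?_))
  exact Submodule.smul_mem _ _
    (Submodule.subset_span (Set.mem_image_of_mem x (Finset.ne_of_mem_erase hi)))

theorem exists_fin_family_not_isUnit_of_sum_smul_mem {t : Finset M}
    (ht : ∀ x ∈ t, x ∉ Submodule.span R ((t : Set M) \ {x}) ⊔ K) {d : ℕ} (hd : d ≤ t.card) :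
    ∃ a : Fin d → M, (∀ i, a i ∈ t) ∧
      ∀ c : Fin d → R, ∑ i, c i • a i ∈ K → ∀ i, ¬IsUnit (c i) := by
  let e : Fin d ↪ t := (Fin.castLEEmb hd).trans t.equivFin.symm.toEmbedding
  refine ⟨fun i ↦ e i, fun i ↦ (e i).2, fun c hc j ↦ not_isUnit_of_sum_smul_mem hc ?_⟩
  have hsub : (fun i ↦ (e i : M)) '' {j}ᶜ ⊆ (t : Set M) \ {(e j : M)} := by
    rintro _ ⟨i, hij, rfl⟩
    exact ⟨(e i).2, fun h ↦ hij (e.injective (Subtype.ext h))⟩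
  exact fun hmem ↦ ht _ (e j).2 (sup_le_sup_right (Submodule.span_mono hsub) K hmem)

end IrredundantGenerators

theorem quotient_by_igt_dim_ge_general {A : Type*} [CommRing A] [IsNoetherianRing A]
    [IsLocalRing A] (d : ℕ) (I : Ideal A) (hI : I ≠ ⊤) (hd : I.height = d) :
    (∀ x ∈ I.radical, ∀ a ∈ I, MemIgt I (x * a) ∧ x * a ∈ I) ∧
    (∃ a : Fin d → A, (∀ i, a i ∈ I) ∧
      ∀ c : Fin d → A, MemIgt I (∑ i, c i * a i) →
        ∀ i, c i ∈ IsLocalRing.maximalIdeal A) := by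
  refine ⟨fun x hx a ha ↦ ⟨memIgt_mul_of_mem_radical hx ha, I.mul_mem_left x ha⟩, ?_⟩
  have hfg : ∀ J : Ideal A, J.FG := IsNoetherian.noetherian
  obtain ⟨N, hN, hpow⟩ := exists_pow_le_pow_succ_of_le_samuelIdealGT (hfg (samuelIdealGT I)) le_rfl
  obtain ⟨t, htI, hsup, hirr⟩ := exists_finset_irredundant_generators_mod (hfg I) (samuelIdealGT I)
  have hjac : I ≤ Ideal.jacobson ⊥ :=
    (IsLocalRing.le_maximalIdeal hI).trans (IsLocalRing.maximalIdeal_le_jacobson ⊥)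
  have hrad : (Ideal.span (t : Set A)).radical = I.radical :=
    radical_eq_of_le_sup (hfg I) hjac (Ideal.span_le.2 htI) hsup hN hpow
  have hcard : d ≤ t.card := by
    exact_mod_cast hd ▸ height_le_card_of_radical_span_eq hI hrad
  obtain ⟨a, hat, ha⟩ := exists_fin_family_not_isUnit_of_sum_smul_mem hirr hcard
  exact ⟨a, fun i ↦ htI (hat i), ha⟩

/-- Observation in §4: let `(A,m,k)` be a Noetherian local ring of Krull
dimension `d` and `I` an `m`-primary ideal.  Then the module `I/(I_> ∩ I)` is annihilated
by `m` (hence is a `k`-vector space) and its `k`-dimension is at least `d`, i.e. there are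
`d` elements of `I` whose images in `I/(I_> ∩ I)` are `k`-linearly independent. -/
theorem quotient_by_igt_dim_ge {A : Type*} [CommRing A] [IsNoetherianRing A] [IsLocalRing A]
    (d : ℕ) (hd : ringKrullDim A = d)
    (I : Ideal A) (hI : I.radical = IsLocalRing.maximalIdeal A) :
    (∀ x ∈ IsLocalRing.maximalIdeal A, ∀ a ∈ I, MemIgt I (x * a) ∧ x * a ∈ I) ∧
    (∃ a : Fin d → A, (∀ i, a i ∈ I) ∧
      ∀ c : Fin d → A, MemIgt I (∑ i, c i * a i) →
        ∀ i, c i ∈ IsLocalRing.maximalIdeal A) := by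
  have hne : I ≠ ⊤ := fun h ↦ Ideal.IsPrime.ne_top' (hI ▸ Ideal.radical_eq_top.2 h)
  have hd' : I.height = d := by
    rw [← IsLocalRing.maximalIdeal_height_eq_ringKrullDim, ← hI,
      height_eq_of_radical_eq I.radical_idem] at hd
    exact_mod_cast hd
  exact hI ▸ quotient_by_igt_dim_ge_general d I hne hd'
end
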